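/- Let S be a proper convex subset of the chambers of a hyperplane arrangement 𝓗 of n hyperplanes in general position in ℝ^d, with |S| = Σ_{i=0}^d C(k,i) for some real k ≥ d−1, where C(k,i) denotes the generalized binomial coefficient k(k−1)⋯(k−i+1)/i!. If |S| ≤ Σ_{i=0}^d C(n−d,i), then |∂S| ≥ Σ_{i=0}^{d−1} (d−i)·C(k,i). In particular, this conclusion holds whenever |S| is at most half of the total number of chambers and n ≥ d²/ln 2 + 2d. -/

import Mathlib

open Set Topology

noncomputable section

/-- A hyperplane arrangement of `n` affine hyperplanes in `ℝ^d`, given by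
nonzero normal vectors and offsets: the `i`-th hyperplane is
`{x | ∑ j, normal i j * x j = offset i}`. -/
structure Arrangement (d n : ℕ) where
  normal : Fin n → (Fin d → ℝ)
  offset : Fin n → ℝ
  normal_ne : ∀ i, normal i ≠ 0

/-- The thickening (regular open hull) `T_S` of a set `S` of chambers. -/
def thickening {d : ℕ} (S : Set (Set (Fin d → ℝ))) : Set (Fin d → ℝ) :=
  interior (closure (⋃ C ∈ S, C))

/-- The set of connected components of a subset `X` of a topological space. -/
def connComps {α : Type*} [TopologicalSpace α] (X : Set α) : Set (Set α) :=
  {c | ∃ x ∈ X, c = connectedComponentIn X x}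

namespace Arrangement

variable {d n : ℕ} (𝓗 : Arrangement d n)

/-- The `i`-th hyperplane of the arrangement. -/
def H (i : Fin n) : Set (Fin d → ℝ) := {x | ∑ j, 𝓗.normal i j * x j = 𝓗.offset i}

/-- The positive open half-space determined by the `i`-th hyperplane. -/
def pos (i : Fin n) : Set (Fin d → ℝ) := {x | 𝓗.offset i < ∑ j, 𝓗.normal i j * x j}

/-- The negative open half-space determined by the `i`-th hyperplane. -/
def neg (i : Fin n) : Set (Fin d → ℝ) := {x | ∑ j, 𝓗.normal i j * x j < 𝓗.offset i}

/-- The complement of the union of the hyperplanes. -/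
def free : Set (Fin d → ℝ) := {x | ∀ i, x ∉ 𝓗.H i}

/-- The chambers: connected components of the complement of the hyperplanes. -/
def chambers : Set (Set (Fin d → ℝ)) :=
  {C | ∃ x ∈ 𝓗.free, C = connectedComponentIn 𝓗.free x}

/-- General position: the normals of any `≤ d` hyperplanes are linearly independent
(so that their intersection is an affine subspace of the right dimension), and no
`d+1` hyperplanes have a common point. -/
def GeneralPosition : Prop :=
  (∀ A : Finset (Fin n), A.card ≤ d →
      LinearIndependent ℝ (fun i : A => 𝓗.normal i.1)) ∧
  (∀ A : Finset (Fin n), A.card = d + 1 → (⋂ i ∈ A, 𝓗.H i) = ∅)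

/-- Hyperplane `e` separates `C` from `C'`. -/
def Separates (e : Fin n) (C C' : Set (Fin d → ℝ)) : Prop :=
  (C ⊆ 𝓗.pos e ∧ C' ⊆ 𝓗.neg e) ∨ (C ⊆ 𝓗.neg e ∧ C' ⊆ 𝓗.pos e)

/-- Adjacency in the chamber graph: two chambers are adjacent iff they are separated
by exactly one hyperplane (equivalently, share a common facet). -/
def Adj (C C' : Set (Fin d → ℝ)) : Prop :=
  C ∈ 𝓗.chambers ∧ C' ∈ 𝓗.chambers ∧ ∃! e : Fin n, 𝓗.Separates e C C'

/-- The edge boundary of a set `S` of chambers, encoded as the set of ordered pairs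
`(C, C')` of adjacent chambers with `C ∈ S` and `C' ∉ S` (each boundary edge is thus
counted exactly once). -/
def edgeBoundary (S : Set (Set (Fin d → ℝ))) :
    Set ((Set (Fin d → ℝ)) × (Set (Fin d → ℝ))) :=
  {q | q.1 ∈ S ∧ q.2 ∉ S ∧ 𝓗.Adj q.1 q.2}

/-- The stratum `T_S(A) = T_S ∩ L_A`. -/
def stratum (S : Set (Set (Fin d → ℝ))) (A : Finset (Fin n)) : Set (Fin d → ℝ) :=
  thickening S ∩ ⋂ i ∈ A, 𝓗.H i

/-- The support of `S`: those `A` with nonempty stratum. -/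
def supp (S : Set (Set (Fin d → ℝ))) : Set (Finset (Fin n)) :=
  {A | (𝓗.stratum S A).Nonempty}

/-- `H_f` bounds the stratum `T_S(A)`: the stratum lies entirely in one of the open
half-spaces of `H_f`, and `H_f` meets the closure of the stratum within `L_A`. -/
def Bounds (f : Fin n) (S : Set (Set (Fin d → ℝ))) (A : Finset (Fin n)) : Prop :=
  (𝓗.stratum S A ⊆ 𝓗.pos f ∨ 𝓗.stratum S A ⊆ 𝓗.neg f) ∧
  (𝓗.H f ∩ closure (𝓗.stratum S A) ∩ ⋂ i ∈ A, 𝓗.H i).Nonempty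

/-- `S` is strata-connected if every nonempty stratum is connected. -/
def StrataConnected (S : Set (Set (Fin d → ℝ))) : Prop :=
  ∀ A ∈ 𝓗.supp S, IsConnected (𝓗.stratum S A)

end Arrangement

/-- The generalized binomial coefficient `C(x, i) = x(x-1)⋯(x-i+1)/i!`. -/
noncomputable def gchoose (x : ℝ) (i : ℕ) : ℝ :=
  (∏ j ∈ Finset.range i, (x - j)) / (Nat.factorial i)

/-
A convex set `S` of chambers consists of the chambers on a prescribed side of each hyperplane in a
set `M`, namely the hyperplanes that do not meet the thickening of `S`. By deletion–restriction, the
chambers in the region cut out by `M` are equinumerous with the set `𝒟` of all `C` such that the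
flat `L_C`, the intersection of the hyperplanes in `C`, meets that region; by general position, `𝒟`
is a simplicial complex of sets of size at most `d`. The boundary edges crossing a hyperplane
`H_f`, `f ∈ M`, are counted by flats contained in `H_f` in the same way. As the trace of the region
on `L_C` has at least `min |M| (d - |C|)` facets, this gives `|∂S| ≥ ∑ C ∈ 𝒟, min |M| (d - |C|)`,
which is the sum over `d - |M| ≤ j < d` of the number of `C ∈ 𝒟` of size at most `j`.
Lovász's form of the Kruskal–Katona theorem bounds this number from below by
`C(k, 0) + ⋯ + C(k, j)`, and the sum of these bounds over all `j < d` is `∑ i < d, (d - i) C(k, i)`.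
If `|M| < d`, the levels `j < d - |M|` are made up for by the level `j = d - |M|`, which contains
all sets of at most that size disjoint from `M`: here `k ≤ n - d`, the size hypothesis, enters. For
sets `S` of at most half the chambers, this hypothesis follows from `C(n, i) ≤ 2 C(n - d, i)`.
-/

section GeneralizedBinomial

lemma gchoose_eq_ringChoose (x : ℝ) (i : ℕ) : gchoose x i = Ring.choose x i := by
  rw [Ring.choose_eq_smul, ← Polynomial.aeval_eq_smeval, Polynomial.aeval_def,
    ← Polynomial.eval_map, descPochhammer_map, descPochhammer_eval_eq_prod_range, gchoose,
    smul_eq_mul, div_eq_inv_mul]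

lemma gchoose_zero (x : ℝ) : gchoose x 0 = 1 := by
  simp [gchoose]

lemma gchoose_one (x : ℝ) : gchoose x 1 = x := by
  simp [gchoose]

lemma gchoose_add_one_succ (x : ℝ) (i : ℕ) :
    gchoose (x + 1) (i + 1) = gchoose x i + gchoose x (i + 1) := by
  simp only [gchoose_eq_ringChoose, Ring.choose_succ_succ]

lemma gchoose_natCast (m i : ℕ) : gchoose m i = m.choose i := by
  rw [gchoose_eq_ringChoose, Ring.choose_natCast]

lemma gchoose_nonneg {x : ℝ} {i : ℕ} (hx : (i : ℝ) - 1 ≤ x) : 0 ≤ gchoose x i := by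
  rw [gchoose, ← descPochhammer_eval_eq_prod_range]
  exact div_nonneg (descPochhammer_nonneg hx) (by positivity)

lemma gchoose_le_gchoose {x y : ℝ} {i : ℕ} (hx : (i : ℝ) - 1 ≤ x) (hxy : x ≤ y) :
    gchoose x i ≤ gchoose y i := by
  simp only [gchoose, ← descPochhammer_eval_eq_prod_range]
  gcongr
  exact monotoneOn_descPochhammer_eval i hx (hx.trans hxy) hxy

/-- The sum `C(x, 0) + ⋯ + C(x, j)`, extending to real `x` the number of chambers of `x`
hyperplanes in general position in `ℝ^j`. -/
def gchooseSum (j : ℕ) (x : ℝ) : ℝ := ∑ i ∈ Finset.range (j + 1), gchoose x i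

lemma gchooseSum_zero (x : ℝ) : gchooseSum 0 x = 1 := by
  simp [gchooseSum, gchoose_zero]

lemma gchooseSum_succ (j : ℕ) (x : ℝ) :
    gchooseSum (j + 1) x = gchooseSum j x + gchoose x (j + 1) :=
  Finset.sum_range_succ _ _

lemma gchooseSum_succ_add_one (j : ℕ) (x : ℝ) :
    gchooseSum (j + 1) (x + 1) = gchooseSum (j + 1) x + gchooseSum j x := by
  simp only [gchooseSum]
  rw [Finset.sum_range_succ', Finset.sum_range_succ' (gchoose x) (j + 1)]
  simp only [gchoose_add_one_succ, gchoose_zero, Finset.sum_add_distrib]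
  ring

lemma gchooseSum_natCast (j m : ℕ) :
    gchooseSum j m = (∑ i ∈ Finset.range (j + 1), m.choose i : ℕ) := by
  simp [gchooseSum, gchoose_natCast]

lemma one_le_gchooseSum {j : ℕ} {x : ℝ} (hx : (j : ℝ) - 1 ≤ x) : 1 ≤ gchooseSum j x := by
  induction j with
  | zero => exact (gchooseSum_zero x).ge
  | succ j ih =>
    have hnonneg := gchoose_nonneg hx
    push_cast at hx
    linarith [gchooseSum_succ j x, ih (by linarith)]

lemma gchooseSum_le_gchooseSum {j : ℕ} {x y : ℝ} (hx : (j : ℝ) - 1 ≤ x) (hxy : x ≤ y) :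
    gchooseSum j x ≤ gchooseSum j y := by
  refine Finset.sum_le_sum fun i hi => gchoose_le_gchoose (le_trans ?_ hx) hxy
  gcongr
  exact Finset.mem_range_succ_iff.1 hi

lemma gchooseSum_lt_gchooseSum {j : ℕ} {x y : ℝ} (hj : 1 ≤ j) (hx : (j : ℝ) - 1 ≤ x)
    (hxy : x < y) : gchooseSum j x < gchooseSum j y := by
  induction j, hj using Nat.le_induction with
  | base => simpa [gchooseSum, Finset.sum_range_succ, gchoose_zero, gchoose_one] using hxy
  | succ j _ ih =>
    have htop := gchoose_le_gchoose hx hxy.le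
    push_cast at hx
    linarith [gchooseSum_succ j x, gchooseSum_succ j y, ih (by linarith)]

lemma gchooseSum_natCast_eq_two_pow {j m : ℕ} (hmj : m ≤ j) : gchooseSum j m = 2 ^ m := by
  rw [gchooseSum_natCast]
  norm_cast
  rw [← Nat.sum_range_choose]
  exact (Finset.sum_subset (Finset.range_mono (by lia)) fun i _ hi =>
    Nat.choose_eq_zero_of_lt (by simpa using hi)).symm

lemma gchooseSum_natCast_le_two_pow (j m : ℕ) : gchooseSum j m ≤ 2 ^ m := by
  rcases le_total m j with hmj | hjm
  · exact (gchooseSum_natCast_eq_two_pow hmj).le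
  · rw [gchooseSum_natCast]
    norm_cast
    rw [← Nat.sum_range_choose]
    exact Finset.sum_le_sum_of_subset (Finset.range_mono (by lia))

lemma sum_gchooseSum_le {j : ℕ} {x : ℝ} (hx : (j : ℝ) - 1 ≤ x) :
    ∑ i ∈ Finset.range (j + 1), gchooseSum i x ≤ gchooseSum j (x + j) := by
  induction j with
  | zero => simp
  | succ j ih =>
    have hmono : gchooseSum (j + 1) x ≤ gchooseSum (j + 1) (x + j) :=
      gchooseSum_le_gchooseSum hx (by simp)
    push_cast at hx ⊢
    calc ∑ i ∈ Finset.range (j + 1 + 1), gchooseSum i x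
        ≤ gchooseSum j (x + j) + gchooseSum (j + 1) (x + j) := by
          rw [Finset.sum_range_succ]
          exact add_le_add (ih (by linarith)) hmono
      _ = gchooseSum (j + 1) (x + (j + 1)) := by
          rw [← add_assoc, gchooseSum_succ_add_one, add_comm]

lemma sum_sub_mul_gchoose (d : ℕ) (x : ℝ) :
    ∑ i ∈ Finset.range d, ((d : ℝ) - i) * gchoose x i =
      ∑ j ∈ Finset.range d, gchooseSum j x := by
  induction d with
  | zero => simp
  | succ d ih =>
    rw [Finset.sum_range_succ (gchooseSum · x), ← ih, gchooseSum,
      Finset.sum_range_succ, Finset.sum_range_succ (gchoose x), ← add_assoc,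
      ← Finset.sum_add_distrib]
    congr 1
    · exact Finset.sum_congr rfl fun i _ => by push_cast; ring
    · push_cast
      ring

lemma two_pow_le_gchooseSum {d : ℕ} {x : ℝ} (hd : 1 ≤ d) (hx : (d : ℝ) - 1 ≤ x) :
    2 ^ (d - 1) ≤ gchooseSum d x := by
  rw [← gchooseSum_natCast_eq_two_pow (Nat.sub_le d 1), Nat.cast_pred hd]
  exact gchooseSum_le_gchooseSum le_rfl hx

lemma le_sub_of_gchooseSum_le {d n : ℕ} {x : ℝ} (hd : 1 ≤ d) (hdn : d ≤ n)
    (hx : (d : ℝ) - 1 ≤ x) (h : gchooseSum d x ≤ gchooseSum d (n - d)) : x ≤ n - d := by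
  have hpow : (2 : ℝ) ^ (d - 1) ≤ 2 ^ (n - d) := by
    calc (2 : ℝ) ^ (d - 1) ≤ gchooseSum d x := two_pow_le_gchooseSum hd hx
      _ ≤ gchooseSum d (n - d : ℕ) := by rwa [Nat.cast_sub hdn]
      _ ≤ 2 ^ (n - d) := gchooseSum_natCast_le_two_pow d (n - d)
  have hsub : d - 1 ≤ n - d := (pow_le_pow_iff_right₀ one_lt_two).1 hpow
  have hle : (d : ℝ) - 1 ≤ n - d := by
    rw [← Nat.cast_sub hdn, ← Nat.cast_pred hd]
    exact_mod_cast hsub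
  by_contra! hlt
  exact (gchooseSum_lt_gchooseSum hd hle hlt).not_ge h

lemma sub_le_exp_mul_sub {x a t : ℝ} (ha : 0 ≤ a) (hta : t ≤ a) (hx : 2 * a < x) :
    x - t ≤ Real.exp (a / (x - 2 * a)) * (x - a - t) := by
  have hpos : 0 < x - 2 * a := by linarith
  have hle : a ≤ a / (x - 2 * a) * (x - a - t) := by
    rw [div_mul_eq_mul_div, le_div_iff₀ hpos]
    exact mul_le_mul_of_nonneg_left (by linarith) ha
  calc x - t ≤ (a / (x - 2 * a) + 1) * (x - a - t) := by linarith
    _ ≤ Real.exp (a / (x - 2 * a)) * (x - a - t) := by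
        gcongr
        · linarith
        · exact Real.add_one_le_exp _

lemma gchoose_le_two_mul_gchoose_sub {d i : ℕ} {x : ℝ} (hi : i ≤ d)
    (hx : (d : ℝ) ^ 2 / Real.log 2 + 2 * d ≤ x) : gchoose x i ≤ 2 * gchoose (x - d) i := by
  rcases Nat.eq_zero_or_pos i with rfl | hipos
  · norm_num [gchoose_zero]
  have hlog : 0 < Real.log 2 := Real.log_pos one_lt_two
  have hdpos : 0 < (d : ℝ) := by exact_mod_cast hipos.trans_le hi
  have hid : (i : ℝ) ≤ d := by exact_mod_cast hi
  have hdiv : (d : ℝ) ^ 2 / Real.log 2 ≤ x - 2 * d := by linarith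
  have hxd : 0 < x - 2 * d := lt_of_lt_of_le (by positivity) hdiv
  have hji : ∀ j ∈ Finset.range i, (j : ℝ) ≤ d := fun j hj =>
    hid.trans' (by exact_mod_cast (Finset.mem_range.1 hj).le)
  have hexp : Real.exp (d / (x - 2 * d)) ^ i ≤ 2 := by
    rw [← Real.exp_nat_mul, ← Real.le_log_iff_exp_le two_pos, ← mul_div_assoc, div_le_iff₀ hxd]
    calc (i : ℝ) * d ≤ d ^ 2 := by rw [sq]; gcongr
      _ ≤ Real.log 2 * (x - 2 * d) := (div_le_iff₀' hlog).1 hdiv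
  have hprod : ∏ j ∈ Finset.range i, (x - j) ≤ 2 * ∏ j ∈ Finset.range i, (x - d - j) := by
    calc ∏ j ∈ Finset.range i, (x - j)
        ≤ ∏ j ∈ Finset.range i, (Real.exp (d / (x - 2 * d)) * (x - d - j)) :=
          Finset.prod_le_prod (fun j hj => by linarith [hji j hj]) fun j hj =>
            sub_le_exp_mul_sub hdpos.le (hji j hj) (by linarith)
      _ = Real.exp (d / (x - 2 * d)) ^ i * ∏ j ∈ Finset.range i, (x - d - j) := by
          rw [Finset.prod_mul_distrib, Finset.prod_const, Finset.card_range]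
      _ ≤ 2 * ∏ j ∈ Finset.range i, (x - d - j) := by
          gcongr
          exact Finset.prod_nonneg fun j hj => by linarith [hji j hj]
  rw [gchoose, gchoose, ← mul_div_assoc]
  gcongr

lemma gchooseSum_le_two_mul_gchooseSum_sub {d : ℕ} {x : ℝ}
    (hx : (d : ℝ) ^ 2 / Real.log 2 + 2 * d ≤ x) : gchooseSum d x ≤ 2 * gchooseSum d (x - d) := by
  rw [gchooseSum, gchooseSum, Finset.mul_sum]
  exact Finset.sum_le_sum fun i hi =>
    gchoose_le_two_mul_gchoose_sub (Finset.mem_range_succ_iff.1 hi) hx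

end GeneralizedBinomial

section LovaszKruskalKatona

open scoped Finset FinsetFamily

lemma isInitSeg_insert {α : Type*} [LinearOrder α] {𝒜 : Finset (Finset α)} {r : ℕ}
    (h𝒜 : Finset.Colex.IsInitSeg 𝒜 r) {s : Finset α} (hs : #s = r)
    (hmin : ∀ t : Finset α, #t = r → t ∉ 𝒜 → toColex s ≤ toColex t) :
    Finset.Colex.IsInitSeg (insert s 𝒜) r := by
  refine ⟨fun t ht => ?_, fun t u ht hu => ?_⟩
  · rcases Finset.mem_insert.1 ht with rfl | ht
    exacts [hs, h𝒜.1 ht]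
  · refine Finset.mem_insert_of_mem ?_
    rcases Finset.mem_insert.1 ht with rfl | ht
    · by_contra hmem
      exact hu.1.not_ge (hmin u hu.2 hmem)
    · exact h𝒜.2 ht hu

lemma exists_isInitSeg_card_eq {α : Type*} [Fintype α] [LinearOrder α] {m r : ℕ}
    (hm : m ≤ (Fintype.card α).choose r) :
    ∃ 𝒜 : Finset (Finset α), Finset.Colex.IsInitSeg 𝒜 r ∧ #𝒜 = m := by
  induction m with
  | zero => exact ⟨∅, Finset.Colex.isInitSeg_empty, rfl⟩
  | succ m ih =>
    obtain ⟨𝒜, h𝒜, hcard⟩ := ih (by lia)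
    have hlt : #𝒜 < #((Finset.univ : Finset α).powersetCard r) := by
      rw [Finset.card_powersetCard, Finset.card_univ]
      lia
    have hne : ((Finset.univ : Finset α).powersetCard r \ 𝒜).Nonempty :=
      Finset.card_pos.1 (by have := Finset.le_card_sdiff 𝒜 (Finset.univ.powersetCard r); lia)
    obtain ⟨s, hs, hmin⟩ := Finset.exists_min_image _ toColex hne
    simp only [Finset.mem_sdiff, Finset.mem_powersetCard_univ] at hs hmin
    exact ⟨insert s 𝒜, isInitSeg_insert h𝒜 hs.1 fun t ht hmem => hmin t ⟨ht, hmem⟩,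
      by rw [Finset.card_insert_of_notMem hs.2, hcard]⟩

variable {α : Type*} [DecidableEq α]

lemma sized_memberSubfamily {𝒜 : Finset (Finset α)} {r : ℕ}
    (h𝒜 : (𝒜 : Set (Finset α)).Sized (r + 1)) (a : α) :
    (𝒜.memberSubfamily a : Set (Finset α)).Sized r := by
  intro s hs
  obtain ⟨hmem, has⟩ := Finset.mem_memberSubfamily.1 hs
  have hcard := h𝒜 hmem
  rwa [Finset.card_insert_of_notMem has, Nat.add_right_cancel_iff] at hcard

lemma sized_nonMemberSubfamily {𝒜 : Finset (Finset α)} {r : ℕ}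
    (h𝒜 : (𝒜 : Set (Finset α)).Sized r) (a : α) :
    (𝒜.nonMemberSubfamily a : Set (Finset α)).Sized r :=
  h𝒜.mono (Finset.coe_subset.2 (Finset.filter_subset _ _))

lemma shadow_nonempty_of_sized {𝒜 : Finset (Finset α)} {r : ℕ}
    (h𝒜 : (𝒜 : Set (Finset α)).Sized (r + 1)) (hne : 𝒜.Nonempty) : (∂ 𝒜).Nonempty := by
  obtain ⟨s, hs⟩ := hne
  obtain ⟨a, ha⟩ : s.Nonempty := Finset.card_pos.1 (by simp [h𝒜 hs])
  exact ⟨s.erase a, Finset.erase_mem_shadow hs ha⟩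

lemma memberSubfamily_subset_nonMemberSubfamily_shadow (𝒜 : Finset (Finset α)) (a : α) :
    𝒜.memberSubfamily a ⊆ (∂ 𝒜).nonMemberSubfamily a := by
  intro s hs
  obtain ⟨hmem, has⟩ := Finset.mem_memberSubfamily.1 hs
  refine Finset.mem_nonMemberSubfamily.2 ⟨?_, has⟩
  simpa [has] using Finset.erase_mem_shadow hmem (Finset.mem_insert_self a s)

lemma shadow_memberSubfamily_subset (𝒜 : Finset (Finset α)) (a : α) :
    ∂ (𝒜.memberSubfamily a) ⊆ (∂ 𝒜).memberSubfamily a := by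
  intro t ht
  obtain ⟨s, hs, b, hb, rfl⟩ := Finset.mem_shadow_iff.1 ht
  obtain ⟨hmem, has⟩ := Finset.mem_memberSubfamily.1 hs
  have hab : a ≠ b := by rintro rfl; exact has hb
  refine Finset.mem_memberSubfamily.2 ⟨?_, fun h => has (Finset.mem_of_mem_erase h)⟩
  rw [← Finset.erase_insert_of_ne hab]
  exact Finset.erase_mem_shadow hmem (Finset.mem_insert_of_mem hb)

lemma card_memberSubfamily_add_card_shadow_le (𝒜 : Finset (Finset α)) (a : α) :
    #(𝒜.memberSubfamily a) + #(∂ (𝒜.memberSubfamily a)) ≤ #(∂ 𝒜) := by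
  rw [← Finset.card_memberSubfamily_add_card_nonMemberSubfamily a (∂ 𝒜), add_comm]
  exact add_le_add (Finset.card_le_card (shadow_memberSubfamily_subset 𝒜 a))
    (Finset.card_le_card (memberSubfamily_subset_nonMemberSubfamily_shadow 𝒜 a))

lemma shadow_nonMemberSubfamily_zero_subset {n r : ℕ} {𝒞 : Finset (Finset (Fin (n + 1)))}
    (h𝒞 : Finset.Colex.IsInitSeg 𝒞 r) :
    ∂ (𝒞.nonMemberSubfamily 0) ⊆ 𝒞.memberSubfamily 0 := by
  intro t ht
  obtain ⟨s, hs, a, ha, rfl⟩ := Finset.mem_shadow_iff.1 ht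
  obtain ⟨hmem, h0⟩ := Finset.mem_nonMemberSubfamily.1 hs
  have h0' : 0 ∉ s.erase a := fun h => h0 (Finset.mem_of_mem_erase h)
  have ha0 : 0 < a := Fin.pos_iff_ne_zero.2 (by rintro rfl; exact h0 ha)
  refine Finset.mem_memberSubfamily.2 ⟨h𝒞.2 hmem ⟨?_, ?_⟩, h0'⟩
  · simpa [Finset.insert_erase ha] using
      (Finset.Colex.insert_lt_insert h0' (Finset.notMem_erase a s)).2 ha0
  · rw [Finset.card_insert_of_notMem h0', Finset.card_erase_add_one ha, h𝒞.1 hmem]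

lemma memberSubfamily_zero_nonempty {n r : ℕ} {𝒞 : Finset (Finset (Fin (n + 1)))}
    (h𝒞 : Finset.Colex.IsInitSeg 𝒞 (r + 1)) (hne : 𝒞.Nonempty) :
    (𝒞.memberSubfamily 0).Nonempty := by
  by_contra hempty
  have hcard := Finset.card_memberSubfamily_add_card_nonMemberSubfamily 0 𝒞
  rw [Finset.not_nonempty_iff_eq_empty.1 hempty, Finset.card_empty, zero_add] at hcard
  have hne' : (𝒞.nonMemberSubfamily 0).Nonempty :=
    Finset.card_pos.1 (hcard ▸ Finset.card_pos.2 hne)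
  exact hempty ((shadow_nonempty_of_sized (sized_nonMemberSubfamily h𝒞.1 0) hne').mono
    (shadow_nonMemberSubfamily_zero_subset h𝒞))

lemma gchoose_sub_one_le_card_memberSubfamily {n r : ℕ} {x : ℝ}
    {𝒞 : Finset (Finset (Fin (n + 1)))} (h𝒞 : Finset.Colex.IsInitSeg 𝒞 (r + 1)) (hne : 𝒞.Nonempty)
    (hx : (r : ℝ) ≤ x) (hcard : gchoose x (r + 1) ≤ #𝒞)
    (ih : (𝒞.nonMemberSubfamily 0).Nonempty → (r : ℝ) ≤ x - 1 →
      gchoose (x - 1) (r + 1) ≤ #(𝒞.nonMemberSubfamily 0) →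
      gchoose (x - 1) r ≤ #(∂ (𝒞.nonMemberSubfamily 0))) :
    gchoose (x - 1) r ≤ #(𝒞.memberSubfamily 0) := by
  rcases lt_or_ge (x - 1) r with hxr | hxr
  · calc gchoose (x - 1) r ≤ gchoose (r : ℝ) r := gchoose_le_gchoose (by linarith) hxr.le
      _ = 1 := by rw [gchoose_natCast, Nat.choose_self, Nat.cast_one]
      _ ≤ #(𝒞.memberSubfamily 0) := by
        exact_mod_cast (memberSubfamily_zero_nonempty h𝒞 hne).card_pos
  by_contra! hlt
  have hsum : (#(𝒞.memberSubfamily 0) : ℝ) + #(𝒞.nonMemberSubfamily 0) = #𝒞 := by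
    exact_mod_cast Finset.card_memberSubfamily_add_card_nonMemberSubfamily 0 𝒞
  have hpascal := gchoose_add_one_succ (x - 1) r
  rw [sub_add_cancel] at hpascal
  have hge : gchoose (x - 1) (r + 1) < #(𝒞.nonMemberSubfamily 0) := by linarith
  have hnonneg : 0 ≤ gchoose (x - 1) (r + 1) := gchoose_nonneg (by simpa using hxr)
  have hne' : (𝒞.nonMemberSubfamily 0).Nonempty :=
    Finset.card_pos.1 (by exact_mod_cast hnonneg.trans_lt hge)
  have hshadow : (#(∂ (𝒞.nonMemberSubfamily 0)) : ℝ) ≤ #(𝒞.memberSubfamily 0) := by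
    exact_mod_cast Finset.card_le_card (shadow_nonMemberSubfamily_zero_subset h𝒞)
  linarith [ih hne' hxr hge.le]

/- Lovász's form of the Kruskal–Katona theorem. By `Finset.kruskal_katona` only initial segments of
the colexicographic order matter; these are split according to whether a set contains `0`. -/
theorem gchoose_le_card_shadow {n r : ℕ} {x : ℝ} {𝒜 : Finset (Finset (Fin n))}
    (h𝒜 : (𝒜 : Set (Finset (Fin n))).Sized (r + 1)) (hne : 𝒜.Nonempty) (hx : (r : ℝ) ≤ x)
    (hcard : gchoose x (r + 1) ≤ #𝒜) : gchoose x r ≤ #(∂ 𝒜) := by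
  induction r generalizing x 𝒜 with
  | zero =>
    rw [gchoose_zero]
    exact_mod_cast (shadow_nonempty_of_sized h𝒜 hne).card_pos
  | succ r ihr =>
    induction hm : #𝒜 using Nat.strong_induction_on generalizing x 𝒜 with
    | _ m ihm =>
    obtain ⟨𝒞, h𝒞, h𝒞𝒜⟩ := exists_isInitSeg_card_eq (α := Fin n) h𝒜.card_le
    have hne𝒞 : 𝒞.Nonempty := Finset.card_pos.1 (h𝒞𝒜 ▸ hne.card_pos)
    rcases n with _ | n
    · obtain ⟨s, hs⟩ := hne
      simpa [Finset.eq_empty_of_isEmpty s] using h𝒜 hs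
    have hsum := Finset.card_memberSubfamily_add_card_nonMemberSubfamily 0 𝒞
    have hne₁ := memberSubfamily_zero_nonempty h𝒞 hne𝒞
    have hcard₁ : gchoose (x - 1) (r + 1) ≤ #(𝒞.memberSubfamily 0) :=
      gchoose_sub_one_le_card_memberSubfamily h𝒞 hne𝒞 hx (h𝒞𝒜 ▸ hcard) fun hne₀ hx₀ hcard₀ =>
        ihm _ (by have := hne₁.card_pos; lia) (sized_nonMemberSubfamily h𝒞.1 0) hne₀ hx₀ hcard₀ rfl
    have hshadow₁ : gchoose (x - 1) r ≤ #(∂ (𝒞.memberSubfamily 0)) :=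
      ihr (sized_memberSubfamily h𝒞.1 0) hne₁ (by push_cast at hx; linarith) hcard₁
    have hle : (#(𝒞.memberSubfamily 0) : ℝ) + #(∂ (𝒞.memberSubfamily 0)) ≤ #(∂ 𝒜) := by
      exact_mod_cast (card_memberSubfamily_add_card_shadow_le 𝒞 0).trans
        (Finset.kruskal_katona h𝒜 h𝒞𝒜.le h𝒞)
    have hpascal := gchoose_add_one_succ (x - 1) r
    rw [sub_add_cancel] at hpascal
    linarith

end LovaszKruskalKatona

section LowerSet

open scoped Finset FinsetFamily

variable {α : Type*} {𝒟 : Finset (Finset α)}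

lemma shadow_slice_succ_subset [DecidableEq α] (h𝒟 : IsLowerSet (𝒟 : Set (Finset α))) (i : ℕ) :
    ∂ (𝒟 # (i + 1)) ⊆ 𝒟 # i := by
  intro t ht
  obtain ⟨s, hs, a, ha, rfl⟩ := Finset.mem_shadow_iff.1 ht
  obtain ⟨hmem, hcard⟩ := Finset.mem_slice.1 hs
  refine Finset.mem_slice.2 ⟨h𝒟 (Finset.erase_subset a s) hmem, ?_⟩
  rw [Finset.card_erase_of_mem ha, hcard, Nat.add_sub_cancel]

lemma card_filter_card_le (𝒟 : Finset (Finset α)) (j : ℕ) :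
    #(𝒟.filter (#· ≤ j)) = ∑ i ∈ Finset.range (j + 1), #(𝒟 # i) := by
  rw [Finset.card_eq_sum_card_fiberwise (f := Finset.card) (t := Finset.range (j + 1))
    fun s hs => by simpa [Nat.lt_succ_iff] using (Finset.mem_filter.1 hs).2]
  refine Finset.sum_congr rfl fun i hi => congrArg _ ?_
  rw [Finset.slice, Finset.filter_filter]
  refine Finset.filter_congr fun s _ => ⟨And.right, fun hs => ⟨?_, hs⟩⟩
  exact hs.trans_le (Finset.mem_range_succ_iff.1 hi)

lemma sum_min_sub_card {d : ℕ} (hd : ∀ C ∈ 𝒟, #C ≤ d) (m : ℕ) :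
    ∑ C ∈ 𝒟, min m (d - #C) = ∑ j ∈ Finset.Ico (d - m) d, #(𝒟.filter (#· ≤ j)) := by
  have hmin : ∀ C ∈ 𝒟, min m (d - #C) = #((Finset.Ico (d - m) d).filter (#C ≤ ·)) := by
    intro C hC
    have hIco : (Finset.Ico (d - m) d).filter (#C ≤ ·) = Finset.Ico (max (d - m) #C) d := by
      ext j
      simp only [Finset.mem_filter, Finset.mem_Ico]
      lia
    have := hd C hC
    rw [hIco, Nat.card_Ico]
    lia
  simp only [Finset.sum_congr rfl hmin, Finset.card_filter]
  exact Finset.sum_comm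

lemma gchooseSum_le_card_filter_of_disjoint_mem [Fintype α] {M : Finset α} {j : ℕ}
    (hM : ∀ C, Disjoint C M → #C ≤ j → C ∈ 𝒟) :
    gchooseSum j (Fintype.card α - #M) ≤ #(𝒟.filter (#· ≤ j)) := by
  classical
  rw [← Nat.cast_sub (Finset.card_le_univ M), gchooseSum_natCast, card_filter_card_le,
    ← Finset.card_compl]
  norm_cast
  refine Finset.sum_le_sum fun i hi => ?_
  rw [← Finset.card_powersetCard]
  refine Finset.card_le_card fun C hC => ?_
  obtain ⟨hsub, hcard⟩ := Finset.mem_powersetCard.1 hC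
  have hle : #C ≤ j := hcard.trans_le (Finset.mem_range_succ_iff.1 hi)
  exact Finset.mem_slice.2 ⟨hM C (Finset.disjoint_left.2 fun a ha =>
    Finset.mem_compl.1 (hsub ha)) hle, hcard⟩

variable {n : ℕ} {𝒟 : Finset (Finset (Fin n))} {k : ℝ}

lemma gchoose_le_card_slice (h𝒟 : IsLowerSet (𝒟 : Set (Finset (Fin n)))) {i j : ℕ} (hij : i ≤ j)
    (hk : (j : ℝ) - 1 ≤ k) (hne : (𝒟 # j).Nonempty) (hcard : gchoose k j ≤ #(𝒟 # j)) :
    gchoose k i ≤ #(𝒟 # i) := by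
  induction j, hij using Nat.le_induction with
  | base => exact hcard
  | succ j _ ih =>
    have hj : (j : ℝ) ≤ k := by simpa using hk
    have hsub := shadow_slice_succ_subset h𝒟 j
    refine ih (by linarith) ((shadow_nonempty_of_sized Finset.sized_slice hne).mono hsub) ?_
    calc gchoose k j ≤ #(∂ (𝒟 # (j + 1))) := gchoose_le_card_shadow Finset.sized_slice hne hj hcard
      _ ≤ #(𝒟 # j) := by exact_mod_cast Finset.card_le_card hsub

lemma gchooseSum_le_card_filter_of_succ (h𝒟 : IsLowerSet (𝒟 : Set (Finset (Fin n)))) {j : ℕ}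
    (hk : (j : ℝ) ≤ k) (hcard : gchooseSum (j + 1) k ≤ #(𝒟.filter (#· ≤ j + 1))) :
    gchooseSum j k ≤ #(𝒟.filter (#· ≤ j)) := by
  rw [card_filter_card_le] at hcard ⊢
  rcases le_or_gt (#(𝒟 # (j + 1)) : ℝ) (gchoose k (j + 1)) with hle | hlt
  · rw [Finset.sum_range_succ, gchooseSum_succ] at hcard
    push_cast at hcard ⊢
    linarith
  have hj : ((j + 1 : ℕ) : ℝ) - 1 ≤ k := by simpa using hk
  have hne : (𝒟 # (j + 1)).Nonempty :=
    Finset.card_pos.1 (by exact_mod_cast (gchoose_nonneg hj).trans_lt hlt)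
  push_cast
  exact Finset.sum_le_sum fun i hi =>
    gchoose_le_card_slice h𝒟 (by have := Finset.mem_range.1 hi; lia) hj hne hlt.le

lemma gchooseSum_le_card_filter (h𝒟 : IsLowerSet (𝒟 : Set (Finset (Fin n)))) {d j : ℕ}
    (hd : ∀ C ∈ 𝒟, #C ≤ d) (hk : (d : ℝ) - 1 ≤ k) (hcard : gchooseSum d k ≤ #𝒟) (hj : j ≤ d) :
    gchooseSum j k ≤ #(𝒟.filter (#· ≤ j)) := by
  induction hj using Nat.decreasingInduction with
  | self => rwa [Finset.filter_true_of_mem hd]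
  | of_succ j hj ih =>
    refine gchooseSum_le_card_filter_of_succ h𝒟 (hk.trans' ?_) ih
    rw [← Nat.cast_pred (Nat.zero_lt_of_lt hj)]
    exact_mod_cast Nat.le_sub_one_of_lt hj

lemma sum_gchooseSum_le_card_filter {d j : ℕ} {M : Finset (Fin n)} (hjM : #M + j ≤ d)
    (hM : ∀ C, Disjoint C M → #C + #M ≤ d → C ∈ 𝒟) (hk : (d : ℝ) - 1 ≤ k) (hkn : k ≤ n - d) :
    ∑ i ∈ Finset.range (j + 1), gchooseSum i k ≤ #(𝒟.filter (#· ≤ j)) := by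
  have hjd : (#M : ℝ) + j ≤ d := by exact_mod_cast hjM
  have hjk : (j : ℝ) - 1 ≤ k := by linarith [(#M).cast_nonneg (α := ℝ)]
  calc ∑ i ∈ Finset.range (j + 1), gchooseSum i k
      ≤ gchooseSum j (k + j) := sum_gchooseSum_le hjk
    _ ≤ gchooseSum j (Fintype.card (Fin n) - #M) :=
        gchooseSum_le_gchooseSum (by linarith [j.cast_nonneg (α := ℝ)])
          (by rw [Fintype.card_fin]; linarith)
    _ ≤ #(𝒟.filter (#· ≤ j)) :=
        gchooseSum_le_card_filter_of_disjoint_mem fun C hC hCj => hM C hC (by lia)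

theorem sum_gchooseSum_le_sum_min (h𝒟 : IsLowerSet (𝒟 : Set (Finset (Fin n)))) {d : ℕ}
    (hd : ∀ C ∈ 𝒟, #C ≤ d) {M : Finset (Fin n)} (hMne : M.Nonempty)
    (hM : ∀ C, Disjoint C M → #C + #M ≤ d → C ∈ 𝒟) (hk : (d : ℝ) - 1 ≤ k) (hkn : k ≤ n - d)
    (hcard : gchooseSum d k ≤ #𝒟) :
    ∑ j ∈ Finset.range d, gchooseSum j k ≤ ((∑ C ∈ 𝒟, min #M (d - #C) : ℕ) : ℝ) := by
  rw [sum_min_sub_card hd]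
  push_cast
  have hlevel : ∀ j < d, gchooseSum j k ≤ #(𝒟.filter (#· ≤ j)) := fun j hj =>
    gchooseSum_le_card_filter h𝒟 hd hk hcard hj.le
  rcases le_or_gt d #M with hdM | hMd
  · rw [Nat.sub_eq_zero_of_le hdM, ← Finset.range_eq_Ico]
    exact Finset.sum_le_sum fun j hj => hlevel j (Finset.mem_range.1 hj)
  have hlt : d - #M < d := Nat.sub_lt_of_pos_le hMne.card_pos hMd.le
  rw [← Finset.sum_range_add_sum_Ico _ (Nat.succ_le_of_lt hlt), Finset.sum_eq_sum_Ico_succ_bot hlt]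
  exact add_le_add (sum_gchooseSum_le_card_filter (by lia) hM hk hkn)
    (Finset.sum_le_sum fun j hj => hlevel j (Finset.mem_Ico.1 hj).2)

end LowerSet

lemma convex_setOf_sign_eq (s : SignType) : Convex ℝ {r : ℝ | SignType.sign r = s} := by
  match s with
  | 0 => simp only [sign_eq_zero_iff]; exact convex_singleton (0 : ℝ)
  | 1 => simp only [sign_eq_one_iff]; exact convex_Ioi (0 : ℝ)
  | -1 => simp only [sign_eq_neg_one_iff]; exact convex_Iio (0 : ℝ)

lemma isOpen_setOf_sign_eq {s : SignType} (hs : s ≠ 0) : IsOpen {r : ℝ | SignType.sign r = s} := by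
  match s with
  | 0 => exact absurd rfl hs
  | 1 => simp only [sign_eq_one_iff]; exact isOpen_Ioi
  | -1 => simp only [sign_eq_neg_one_iff]; exact isOpen_Iio

namespace Arrangement

section SignVector

variable {d n : ℕ} (𝓗 : Arrangement d n)

/-- The affine form whose zero set is the hyperplane `𝓗.H i`. -/
def form (i : Fin n) : (Fin d → ℝ) →ᵃ[ℝ] ℝ :=
  (dotProductBilin ℝ ℝ (𝓗.normal i)).toAffineMap - AffineMap.const ℝ (Fin d → ℝ) (𝓗.offset i)

/-- The sign vector of a point, recording its position relative to each hyperplane. -/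
def signVec (x : Fin d → ℝ) (i : Fin n) : SignType := SignType.sign (𝓗.form i x)

/-- The points whose position relative to the hyperplanes indexed by `B` is prescribed by `s`.
In particular `𝓗.region A 0` is the flat `L_A`, the intersection of the hyperplanes in `A`. -/
def region (B : Finset (Fin n)) (s : Fin n → SignType) : Set (Fin d → ℝ) :=
  {x | ∀ i ∈ B, 𝓗.signVec x i = s i}

variable {𝓗} {A B : Finset (Fin n)} {s t : Fin n → SignType} {x y z : Fin d → ℝ} {i : Fin n}

lemma form_apply : 𝓗.form i x = ∑ j, 𝓗.normal i j * x j - 𝓗.offset i := by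
  simp [form, dotProduct]

lemma mem_H : x ∈ 𝓗.H i ↔ 𝓗.signVec x i = 0 := by
  rw [signVec, sign_eq_zero_iff, form_apply, sub_eq_zero, H, Set.mem_ofPred_eq]

lemma mem_pos : x ∈ 𝓗.pos i ↔ 𝓗.signVec x i = 1 := by
  rw [signVec, sign_eq_one_iff, form_apply, sub_pos, pos, Set.mem_ofPred_eq]

lemma mem_neg : x ∈ 𝓗.neg i ↔ 𝓗.signVec x i = -1 := by
  rw [signVec, sign_eq_neg_one_iff, form_apply, sub_neg, neg, Set.mem_ofPred_eq]

lemma mem_free : x ∈ 𝓗.free ↔ ∀ i, 𝓗.signVec x i ≠ 0 := by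
  simp only [free, Set.mem_ofPred_eq, mem_H, ne_eq]

lemma mem_region : x ∈ 𝓗.region B s ↔ ∀ i ∈ B, 𝓗.signVec x i = s i := Iff.rfl

lemma region_empty : 𝓗.region ∅ s = Set.univ :=
  Set.eq_univ_of_forall fun _ i hi => absurd hi (Finset.notMem_empty i)

lemma mem_region_singleton : x ∈ 𝓗.region {i} s ↔ 𝓗.signVec x i = s i := by
  simp only [mem_region, Finset.mem_singleton, forall_eq]

lemma mem_region_insert {b : Fin n} :
    x ∈ 𝓗.region (insert b B) s ↔ 𝓗.signVec x b = s b ∧ x ∈ 𝓗.region B s :=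
  Finset.forall_mem_insert _ _ _

lemma mem_region_union :
    x ∈ 𝓗.region (A ∪ B) s ↔ x ∈ 𝓗.region A s ∧ x ∈ 𝓗.region B s :=
  Finset.forall_mem_union

lemma region_subset_region (hAB : A ⊆ B) : 𝓗.region B s ⊆ 𝓗.region A s :=
  fun _ hx i hi => hx i (hAB hi)

lemma region_congr (hst : ∀ i ∈ B, s i = t i) : 𝓗.region B s = 𝓗.region B t := by
  ext x
  exact forall₂_congr fun i hi => by rw [hst i hi]

lemma convex_region (B : Finset (Fin n)) (s : Fin n → SignType) : Convex ℝ (𝓗.region B s) := by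
  simp only [region, Set.ofPred_forall]
  exact convex_iInter₂ fun i _ => (convex_setOf_sign_eq (s i)).affine_preimage (𝓗.form i)

lemma isOpen_region (hs : ∀ i ∈ B, s i ≠ 0) : IsOpen (𝓗.region B s) := by
  simp only [region, Set.ofPred_forall]
  exact isOpen_biInter_finset fun i hi =>
    (isOpen_setOf_sign_eq (hs i hi)).preimage (𝓗.form i).continuous_of_finiteDimensional

lemma signVec_eq_of_mem_openSegment (hy : y ∈ openSegment ℝ x z)
    (hx : 𝓗.signVec x i = 0 ∨ 𝓗.signVec x i = 𝓗.signVec z i) :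
    𝓗.signVec y i = 𝓗.signVec z i := by
  rcases hx with hx | hx
  · obtain ⟨a, b, -, hb, hab, rfl⟩ := hy
    rw [signVec, sign_eq_zero_iff] at hx
    rw [signVec, signVec, Convex.combo_affine_apply hab, hx, smul_zero, zero_add, smul_eq_mul,
      sign_mul, sign_pos hb, one_mul]
  · exact mem_region_singleton.1 ((convex_region {i} (𝓗.signVec z)).openSegment_subset
      (mem_region_singleton.2 hx) (mem_region_singleton.2 rfl) hy)

lemma exists_mem_signVec_eq_zero {X : Set (Fin d → ℝ)} (hX : IsPreconnected X) (hx : x ∈ X)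
    (hy : y ∈ X) (hxy : 𝓗.signVec x i ≠ 𝓗.signVec y i) : ∃ z ∈ X, 𝓗.signVec z i = 0 := by
  by_contra! hne
  refine hxy (hX.constant (f := fun z => 𝓗.signVec z i) (fun z hz => ?_) hx hy)
  have hsign : ContinuousAt SignType.sign (𝓗.form i z) :=
    continuousAt_sign_of_ne_zero fun h => hne z hz (sign_eq_zero_iff.2 h)
  exact (hsign.comp (𝓗.form i).continuous_of_finiteDimensional.continuousAt).continuousWithinAt

end SignVector

section GeneralPosition

variable {d n : ℕ} {𝓗 : Arrangement d n} {A B : Finset (Fin n)} {x : Fin d → ℝ}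
  {U : Set (Fin d → ℝ)}

lemma exists_form_eq (hgp : 𝓗.GeneralPosition) (hB : B.card ≤ d) (c : Fin n → ℝ) :
    ∃ x, ∀ i ∈ B, 𝓗.form i x = c i := by
  have hli := hgp.1 B hB
  obtain ⟨g, hg⟩ := LinearMap.exists_extend
    ((Module.Basis.span hli).constr ℝ fun i : B => c i + 𝓗.offset i)
  refine ⟨fun j => g (Pi.single j 1), fun i hi => ?_⟩
  have hnormal : g (𝓗.normal i) = c i + 𝓗.offset i := by
    have hbasis := (Module.Basis.span hli).constr_basis ℝ
      (fun i : B => c i + 𝓗.offset i) ⟨i, hi⟩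
    rw [← hg] at hbasis
    simpa [Module.Basis.span_apply] using hbasis
  have hsum : g (𝓗.normal i) = ∑ j, 𝓗.normal i j * g (Pi.single j 1) := by
    conv_lhs => rw [pi_eq_sum_univ' (𝓗.normal i)]
    simp only [map_sum, map_smul, smul_eq_mul]
  rw [form_apply, ← hsum, hnormal, add_sub_cancel_right]

lemma region_nonempty (hgp : 𝓗.GeneralPosition) (hB : B.card ≤ d) (s : Fin n → SignType) :
    (𝓗.region B s).Nonempty := by
  obtain ⟨x, hx⟩ := exists_form_eq hgp hB fun i => (s i : ℝ)
  refine ⟨x, fun i hi => ?_⟩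
  rw [signVec, hx i hi]
  cases s i <;> simp

lemma card_le_of_mem_region_zero (hgp : 𝓗.GeneralPosition) (hx : x ∈ 𝓗.region A 0) :
    A.card ≤ d := by
  by_contra! hlt
  obtain ⟨B, hBA, hB⟩ := Finset.exists_subset_card_eq (Nat.succ_le_of_lt hlt)
  have hmem : x ∈ ⋂ i ∈ B, 𝓗.H i := Set.mem_iInter₂.2 fun i hi => mem_H.2 (hx i (hBA hi))
  rw [hgp.2 B hB] at hmem
  exact hmem

lemma inter_region_nonempty_of_mem_region_zero (hgp : 𝓗.GeneralPosition) (hU : IsOpen U)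
    (hxU : x ∈ U) (hx : x ∈ 𝓗.region A 0) (s : Fin n → SignType) : (U ∩ 𝓗.region A s).Nonempty := by
  obtain ⟨w, hw⟩ := region_nonempty hgp (card_le_of_mem_region_zero hgp hx) s
  have hclosure : x ∈ closure (openSegment ℝ x w) := by
    rw [closure_openSegment]
    exact left_mem_segment ℝ x w
  obtain ⟨y, hyU, hy⟩ := mem_closure_iff.1 hclosure U hU hxU
  exact ⟨y, hyU, fun i hi => (signVec_eq_of_mem_openSegment hy (.inl (hx i hi))).trans (hw i hi)⟩

end GeneralPosition

section Walls

open scoped Finset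

variable {d n : ℕ} (𝓗 : Arrangement d n)

open scoped Classical in
/-- The hyperplanes `f ∈ M` that carry a facet of the trace of `𝓗.region M s` on the flat `L_A`:
some point of `L_A` lies on `𝓗.H f` and on the side prescribed by `s` of all other hyperplanes
in `M`. -/
def walls (A M : Finset (Fin n)) (s : Fin n → SignType) : Finset (Fin n) :=
  M.filter fun f => (𝓗.region (insert f A) 0 ∩ 𝓗.region (M.erase f) s).Nonempty

variable {𝓗} {A M N : Finset (Fin n)} {s : Fin n → SignType} {f g : Fin n} {z : Fin d → ℝ}

lemma mem_walls : f ∈ 𝓗.walls A M s ↔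
    f ∈ M ∧ (𝓗.region (insert f A) 0 ∩ 𝓗.region (M.erase f) s).Nonempty := by
  simp only [walls, Finset.mem_filter]

lemma signVec_ne_neg_of_region_subset (hne : (𝓗.region A 0 ∩ 𝓗.region M s).Nonempty)
    (hN : 𝓗.region A 0 ∩ 𝓗.region N s ⊆ 𝓗.region M s) (hNM : N ⊆ M)
    (hz : z ∈ 𝓗.region (insert f A) 0) (hzN : z ∈ 𝓗.region (N.erase f) s)
    (hg : g ∈ M) (hsg : s g ≠ 0) : 𝓗.signVec z g ≠ -s g := by
  intro hzg
  obtain ⟨x, hxA, hxM⟩ := hne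
  obtain ⟨hzf, hzA⟩ := mem_region_insert.1 hz
  have hsegment : openSegment ℝ z x ⊆ 𝓗.region M s := by
    intro y hy
    refine hN ⟨(convex_region A 0).openSegment_subset hzA hxA hy, fun i hi => ?_⟩
    rw [← hxM i (hNM hi)]
    refine signVec_eq_of_mem_openSegment hy ?_
    rcases eq_or_ne i f with rfl | hif
    · exact .inl hzf
    · exact .inr ((hzN i (Finset.mem_erase.2 ⟨hif, hi⟩)).trans (hxM i (hNM hi)).symm)
  have hclosure : z ∈ closure (openSegment ℝ z x) := by
    rw [closure_openSegment]
    exact left_mem_segment ℝ z x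
  have hopen : IsOpen (𝓗.region {g} (-s)) := isOpen_region (by simpa using hsg)
  obtain ⟨y, hyg, hy⟩ := mem_closure_iff.1 hclosure _ hopen (mem_region_singleton.2 hzg)
  have hneg : 𝓗.signVec y g = -s g := mem_region_singleton.1 hyg
  rw [hsegment hy g hg] at hneg
  exact hsg (SignType.self_eq_neg_iff.1 hneg)

lemma mem_region_erase_of_region_subset (hgp : 𝓗.GeneralPosition) (hAM : Disjoint A M)
    (hs : ∀ i ∈ M, s i ≠ 0) (hne : (𝓗.region A 0 ∩ 𝓗.region M s).Nonempty)
    (hN : 𝓗.region A 0 ∩ 𝓗.region N s ⊆ 𝓗.region M s) (hNM : N ⊆ M)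
    (hz : z ∈ 𝓗.region (insert f A) 0) (hzN : z ∈ 𝓗.region (N.erase f) s) :
    z ∈ 𝓗.region (M.erase f) s := by
  intro g hg
  obtain ⟨hgf, hgM⟩ := Finset.mem_erase.1 hg
  by_contra hzg
  have hzg₀ : 𝓗.signVec z g = 0 := by
    have hneg := signVec_ne_neg_of_region_subset hne hN hNM hz hzN hgM (hs g hgM)
    have hsg := hs g hgM
    revert hneg hzg hsg
    generalize 𝓗.signVec z g = u, s g = v
    decide +revert
  have hopen : IsOpen (𝓗.region (N.erase f) s) :=
    isOpen_region fun i hi => hs i (hNM (Finset.mem_of_mem_erase hi))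
  obtain ⟨y, hyN, hy⟩ := inter_region_nonempty_of_mem_region_zero hgp hopen hzN
    (mem_region_insert.2 ⟨hzg₀, hz⟩) (Function.update 0 g (-s g))
  obtain ⟨hyg, hyA⟩ := mem_region_insert.1 hy
  rw [Function.update_self] at hyg
  have hgA : g ∉ insert f A := by
    simpa [hgf] using Finset.disjoint_right.1 hAM hgM
  have hyA₀ : y ∈ 𝓗.region (insert f A) 0 := fun i hi => by
    rw [hyA i hi, Function.update_of_ne (by rintro rfl; exact hgA hi)]
  exact signVec_ne_neg_of_region_subset hne hN hNM hyA₀ hyN hgM (hs g hgM) hyg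

/- An inclusion-minimal subset of `M` that cuts out the same part of `L_A` consists of walls. -/
lemma region_walls_subset (hgp : 𝓗.GeneralPosition) (hAM : Disjoint A M)
    (hs : ∀ i ∈ M, s i ≠ 0) (hne : (𝓗.region A 0 ∩ 𝓗.region M s).Nonempty) :
    𝓗.region A 0 ∩ 𝓗.region (𝓗.walls A M s) s ⊆ 𝓗.region M s := by
  obtain ⟨N, hNM, hmin⟩ := exists_minimal_le_of_wellFoundedLT
    (fun N => 𝓗.region A 0 ∩ 𝓗.region N s ⊆ 𝓗.region M s) M Set.inter_subset_right
  suffices hNwalls : N ⊆ 𝓗.walls A M s from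
    (Set.inter_subset_inter_right _ (region_subset_region hNwalls)).trans hmin.prop
  intro f hf
  obtain ⟨x, hxA, hxM⟩ := hne
  obtain ⟨y, ⟨hyA, hyN⟩, hyM⟩ := Set.not_subset.1
    (hmin.not_prop_of_lt (Finset.erase_ssubset hf))
  have hyf : 𝓗.signVec x f ≠ 𝓗.signVec y f := by
    intro hxy
    refine hyM (hmin.prop ⟨hyA, ?_⟩)
    rw [← Finset.insert_erase hf]
    exact mem_region_insert.2 ⟨hxy ▸ hxM f (hNM hf), hyN⟩
  have hconv : Convex ℝ (𝓗.region A 0 ∩ 𝓗.region (N.erase f) s) :=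
    (convex_region _ _).inter (convex_region _ _)
  obtain ⟨z, ⟨hzA, hzN⟩, hzf⟩ := exists_mem_signVec_eq_zero hconv.isPreconnected
    ⟨hxA, region_subset_region ((Finset.erase_subset f N).trans hNM) hxM⟩ ⟨hyA, hyN⟩ hyf
  have hz : z ∈ 𝓗.region (insert f A) 0 := mem_region_insert.2 ⟨hzf, hzA⟩
  exact mem_walls.2 ⟨hNM hf, z, hz,
    mem_region_erase_of_region_subset hgp hAM hs ⟨x, hxA, hxM⟩ hmin.prop hNM hz hzN⟩

lemma min_card_le_card_walls (hgp : 𝓗.GeneralPosition) (hAM : Disjoint A M)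
    (hs : ∀ i ∈ M, s i ≠ 0) (hne : (𝓗.region A 0 ∩ 𝓗.region M s).Nonempty) :
    min #M (d - #A) ≤ #(𝓗.walls A M s) := by
  by_contra! hlt
  obtain ⟨hltM, hltA⟩ := lt_min_iff.1 hlt
  obtain ⟨g, hgM, hg⟩ := Finset.exists_mem_notMem_of_card_lt_card hltM
  have hcard : #(insert g (A ∪ 𝓗.walls A M s)) ≤ d := by
    have := Finset.card_insert_le g (A ∪ 𝓗.walls A M s)
    have := Finset.card_union_le A (𝓗.walls A M s)
    lia
  obtain ⟨x, hx⟩ := region_nonempty hgp hcard (A.piecewise 0 (Function.update s g (-s g)))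
  obtain ⟨hxg, hx⟩ := mem_region_insert.1 hx
  obtain ⟨hxA, hxW⟩ := mem_region_union.1 hx
  have hgA : g ∉ A := Finset.disjoint_right.1 hAM hgM
  rw [Finset.piecewise_eq_of_notMem _ _ _ hgA, Function.update_self] at hxg
  have hxA₀ : x ∈ 𝓗.region A 0 := fun i hi => by
    rw [hxA i hi, Finset.piecewise_eq_of_mem _ _ _ hi]
  have hxWs : x ∈ 𝓗.region (𝓗.walls A M s) s := fun i hi => by
    have hiA : i ∉ A := Finset.disjoint_right.1 hAM (mem_walls.1 hi).1
    rw [hxW i hi, Finset.piecewise_eq_of_notMem _ _ _ hiA,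
      Function.update_of_ne (by rintro rfl; exact hg hi)]
  have hself : s g = -s g := (region_walls_subset hgp hAM hs hne ⟨hxA₀, hxWs⟩ g hgM).symm.trans hxg
  exact hs g hgM (SignType.self_eq_neg_iff.1 hself)

end Walls

end Arrangement

namespace Arrangement

section DeletionRestriction

open scoped Finset

variable {d n : ℕ} (𝓗 : Arrangement d n)

open scoped Classical in
/-- The sign patterns with support `B` realized by points of `U` on the flat `L_A`. If `B` is
disjoint from `A`, these index the pieces into which the hyperplanes in `B` cut `U ∩ L_A`. -/
def patterns (A B : Finset (Fin n)) (U : Set (Fin d → ℝ)) : Finset (Fin n → SignType) :=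
  Finset.univ.filter fun s =>
    Function.support s = B ∧ (U ∩ 𝓗.region A 0 ∩ 𝓗.region B s).Nonempty

open scoped Classical in
/-- The sets `C ⊆ B` of hyperplanes whose intersection with the flat `L_A` meets `U`. -/
def flats (A B : Finset (Fin n)) (U : Set (Fin d → ℝ)) : Finset (Finset (Fin n)) :=
  B.powerset.filter fun C => (U ∩ 𝓗.region (A ∪ C) 0).Nonempty

variable {𝓗} {A B C : Finset (Fin n)} {U : Set (Fin d → ℝ)} {s : Fin n → SignType} {b : Fin n}

lemma mem_patterns : s ∈ 𝓗.patterns A B U ↔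
    Function.support s = B ∧ (U ∩ 𝓗.region A 0 ∩ 𝓗.region B s).Nonempty := by
  simp only [patterns, Finset.mem_filter, Finset.mem_univ, true_and]

lemma mem_flats : C ∈ 𝓗.flats A B U ↔ C ⊆ B ∧ (U ∩ 𝓗.region (A ∪ C) 0).Nonempty := by
  simp only [flats, Finset.mem_filter, Finset.mem_powerset]

lemma card_flats_insert (hb : b ∉ B) :
    #(𝓗.flats A (insert b B) U) = #(𝓗.flats A B U) + #(𝓗.flats (insert b A) B U) := by
  have hnonMember : (𝓗.flats A (insert b B) U).nonMemberSubfamily b = 𝓗.flats A B U := by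
    ext C
    simp only [Finset.mem_nonMemberSubfamily, mem_flats]
    have : b ∉ C → (C ⊆ insert b B ↔ C ⊆ B) := Finset.subset_insert_iff_of_notMem
    grind
  have hmember : (𝓗.flats A (insert b B) U).memberSubfamily b = 𝓗.flats (insert b A) B U := by
    ext C
    simp only [Finset.mem_memberSubfamily, mem_flats, Finset.union_insert, Finset.insert_union]
    have : b ∉ C → (insert b C ⊆ insert b B ↔ C ⊆ B) := Finset.insert_subset_insert_iff
    grind
  rw [← Finset.card_memberSubfamily_add_card_nonMemberSubfamily b, hnonMember, hmember, add_comm]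

lemma exists_mem_patterns_of_mem_patterns_insert (hgp : 𝓗.GeneralPosition) (hU : IsOpen U)
    (hbA : b ∉ A) (hs : s ∈ 𝓗.patterns (insert b A) B U) (e : Fin n → SignType) :
    s ∈ 𝓗.patterns A B (U ∩ 𝓗.region {b} e) := by
  obtain ⟨hsupport, x, ⟨hxU, hxA⟩, hxB⟩ := mem_patterns.1 hs
  have hopen : IsOpen (U ∩ 𝓗.region B s) := hU.inter (isOpen_region fun i hi => by
    rwa [← Function.mem_support, hsupport, Finset.mem_coe])
  obtain ⟨y, ⟨hyU, hyB⟩, hy⟩ := inter_region_nonempty_of_mem_region_zero hgp hopen ⟨hxU, hxB⟩ hxA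
    (Function.update 0 b (e b))
  obtain ⟨hyb, hyA⟩ := mem_region_insert.1 hy
  rw [Function.update_self] at hyb
  have hyA₀ : y ∈ 𝓗.region A 0 := fun i hi => by
    rw [hyA i hi, Function.update_of_ne (by rintro rfl; exact hbA hi)]
  exact mem_patterns.2 ⟨hsupport, y, ⟨⟨hyU, mem_region_singleton.2 hyb⟩, hyA₀⟩, hyB⟩

lemma patterns_mono {V : Set (Fin d → ℝ)} (hUV : U ⊆ V) :
    𝓗.patterns A B U ⊆ 𝓗.patterns A B V := by
  intro s hs
  obtain ⟨hsupport, hne⟩ := mem_patterns.1 hs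
  exact mem_patterns.2 ⟨hsupport, hne.mono (by gcongr)⟩

lemma patterns_union (hgp : 𝓗.GeneralPosition) (hU : IsOpen U) (hbA : b ∉ A) :
    𝓗.patterns A B (U ∩ 𝓗.region {b} 1) ∪ 𝓗.patterns A B (U ∩ 𝓗.region {b} (-1)) =
      𝓗.patterns A B U := by
  refine (Finset.union_subset (patterns_mono Set.inter_subset_left)
    (patterns_mono Set.inter_subset_left)).antisymm fun s hs => ?_
  obtain ⟨hsupport, x, ⟨hxU, hxA⟩, hxB⟩ := mem_patterns.1 hs
  rw [Finset.mem_union]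
  rcases (𝓗.signVec x b).trichotomy with hxb | hxb | hxb
  · exact .inr (mem_patterns.2 ⟨hsupport, x, ⟨⟨hxU, mem_region_singleton.2 hxb⟩, hxA⟩, hxB⟩)
  · exact .inl (exists_mem_patterns_of_mem_patterns_insert hgp hU hbA
      (mem_patterns.2 ⟨hsupport, x, ⟨hxU, mem_region_insert.2 ⟨hxb, hxA⟩⟩, hxB⟩) 1)
  · exact .inl (mem_patterns.2 ⟨hsupport, x, ⟨⟨hxU, mem_region_singleton.2 hxb⟩, hxA⟩, hxB⟩)

lemma patterns_inter (hgp : 𝓗.GeneralPosition) (hU : IsOpen U) (hconv : Convex ℝ U)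
    (hbA : b ∉ A) :
    𝓗.patterns A B (U ∩ 𝓗.region {b} 1) ∩ 𝓗.patterns A B (U ∩ 𝓗.region {b} (-1)) =
      𝓗.patterns (insert b A) B U := by
  refine Finset.Subset.antisymm (fun s hs => ?_) fun s hs => Finset.mem_inter.2
    ⟨exists_mem_patterns_of_mem_patterns_insert hgp hU hbA hs 1,
      exists_mem_patterns_of_mem_patterns_insert hgp hU hbA hs (-1)⟩
  obtain ⟨hpos, hneg⟩ := Finset.mem_inter.1 hs
  obtain ⟨hsupport, x, ⟨⟨hxU, hxb⟩, hxA⟩, hxB⟩ := mem_patterns.1 hpos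
  obtain ⟨-, y, ⟨⟨hyU, hyb⟩, hyA⟩, hyB⟩ := mem_patterns.1 hneg
  rw [mem_region_singleton] at hxb hyb
  have hconv' : Convex ℝ (U ∩ 𝓗.region A 0 ∩ 𝓗.region B s) :=
    (hconv.inter (convex_region A 0)).inter (convex_region B s)
  have hxy : 𝓗.signVec x b ≠ 𝓗.signVec y b := by simp [hxb, hyb]
  obtain ⟨z, ⟨⟨hzU, hzA⟩, hzB⟩, hzb⟩ := exists_mem_signVec_eq_zero hconv'.isPreconnected
    ⟨⟨hxU, hxA⟩, hxB⟩ ⟨⟨hyU, hyA⟩, hyB⟩ hxy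
  exact mem_patterns.2 ⟨hsupport, z, ⟨hzU, mem_region_insert.2 ⟨hzb, hzA⟩⟩, hzB⟩

lemma card_filter_patterns_insert (hb : b ∉ B) {e : Fin n → SignType} (he : e b ≠ 0) :
    #((𝓗.patterns A (insert b B) U).filter (· b = e b)) =
      #(𝓗.patterns A B (U ∩ 𝓗.region {b} e)) := by
  have hregion : ∀ (s : Fin n → SignType) (v : SignType),
      𝓗.region B (Function.update s b v) = 𝓗.region B s := fun s v =>
    region_congr fun i hi => Function.update_of_ne (by rintro rfl; exact hb hi) v s
  refine Finset.card_nbij' (Function.update · b 0) (Function.update · b (e b)) ?_ ?_ ?_ ?_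
  · intro s hs
    obtain ⟨hs, hsb⟩ := Finset.mem_filter.1 hs
    obtain ⟨hsupport, x, ⟨hxU, hxA⟩, hx⟩ := mem_patterns.1 hs
    obtain ⟨hxb, hxB⟩ := mem_region_insert.1 hx
    refine mem_patterns.2 ⟨?_, x, ⟨⟨hxU, mem_region_singleton.2 (hxb.trans hsb)⟩, hxA⟩, ?_⟩
    · rw [Function.support_update_zero, hsupport, Finset.coe_insert,
        Set.insert_sdiff_self_of_notMem (by simpa using hb)]
    · rwa [hregion]
  · intro s hs
    obtain ⟨hsupport, x, ⟨⟨hxU, hxb⟩, hxA⟩, hxB⟩ := mem_patterns.1 hs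
    refine Finset.mem_filter.2
      ⟨mem_patterns.2 ⟨?_, x, ⟨hxU, hxA⟩, mem_region_insert.2 ⟨?_, ?_⟩⟩, ?_⟩
    · rw [Function.support_update_of_ne_zero _ _ he, hsupport, Finset.coe_insert]
    · exact (mem_region_singleton.1 hxb).trans (Function.update_self b (e b) s).symm
    · rwa [hregion]
    · exact Function.update_self _ _ _
  · intro s hs
    beta_reduce
    rw [Function.update_idem, ← (Finset.mem_filter.1 hs).2, Function.update_eq_self]
  · intro s hs
    have hsb : s b = 0 := by
      rwa [← Function.notMem_support, (mem_patterns.1 hs).1]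
    beta_reduce
    rw [Function.update_idem, ← hsb, Function.update_eq_self]

lemma card_patterns_insert (hgp : 𝓗.GeneralPosition) (hU : IsOpen U) (hconv : Convex ℝ U)
    (hbA : b ∉ A) (hbB : b ∉ B) :
    #(𝓗.patterns A (insert b B) U) = #(𝓗.patterns A B U) + #(𝓗.patterns (insert b A) B U) := by
  have hsplit : (𝓗.patterns A (insert b B) U).filter (¬ · b = (1 : Fin n → SignType) b) =
      (𝓗.patterns A (insert b B) U).filter (· b = (-1 : Fin n → SignType) b) := by
    refine Finset.filter_congr fun s hs => ?_
    have hsb : s b ≠ 0 := by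
      rw [← Function.mem_support, (mem_patterns.1 hs).1]
      exact Finset.mem_insert_self b B
    revert hsb
    simp only [Pi.one_apply, Pi.neg_apply]
    generalize s b = v
    decide +revert
  rw [← patterns_union (B := B) hgp hU hbA, ← patterns_inter hgp hU hconv hbA,
    Finset.card_union_add_card_inter, ← card_filter_patterns_insert hbB (by simp),
    ← card_filter_patterns_insert hbB (by simp), ← hsplit, Finset.card_filter_add_card_filter_not]

lemma card_patterns_empty : #(𝓗.patterns A ∅ U) = #(𝓗.flats A ∅ U) := by
  refine Finset.card_nbij' (fun _ => ∅) (fun _ => 0) ?_ ?_ ?_ ?_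
  · intro s hs
    obtain ⟨-, hne⟩ := mem_patterns.1 hs
    rw [region_empty, Set.inter_univ] at hne
    exact mem_flats.2 ⟨subset_rfl, by rwa [Finset.union_empty]⟩
  · intro C hC
    obtain ⟨hC, hne⟩ := mem_flats.1 hC
    rw [Finset.subset_empty.1 hC, Finset.union_empty] at hne
    exact mem_patterns.2 ⟨by simp, by rwa [region_empty, Set.inter_univ]⟩
  · intro s hs
    exact (Function.support_eq_empty_iff.1 (by simpa using (mem_patterns.1 hs).1)).symm
  · intro C hC
    exact (Finset.subset_empty.1 (mem_flats.1 hC).1).symm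

/- Deletion–restriction: both sides count `B = insert b B'` as the sum of the counts for `B'` on
`L_A` and on `L_A ∩ H_b`. -/
theorem card_patterns_eq_card_flats (hgp : 𝓗.GeneralPosition) (hU : IsOpen U)
    (hconv : Convex ℝ U) (hAB : Disjoint A B) : #(𝓗.patterns A B U) = #(𝓗.flats A B U) := by
  induction B using Finset.induction_on generalizing A with
  | empty => exact card_patterns_empty
  | insert b B hb ih =>
    obtain ⟨hbA, hAB⟩ := Finset.disjoint_insert_right.1 hAB
    rw [card_patterns_insert hgp hU hconv hbA hb, card_flats_insert hb, ih hAB,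
      ih (Finset.disjoint_insert_left.2 ⟨hb, hAB⟩)]

end DeletionRestriction

end Arrangement

namespace Arrangement

section Chambers

variable {d n : ℕ} (𝓗 : Arrangement d n)

/-- The cell of points with sign vector `t`. -/
def cell (t : Fin n → SignType) : Set (Fin d → ℝ) := 𝓗.region Finset.univ t

/-- The sign vectors of the chambers (the topes of the oriented matroid of `𝓗`). -/
def topes : Set (Fin n → SignType) := 𝓗.signVec '' 𝓗.free

/-- The chambers lying on the side prescribed by `s` of every hyperplane in `M`. -/
def chambersIn (M : Finset (Fin n)) (s : Fin n → SignType) : Set (Set (Fin d → ℝ)) :=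
  {C ∈ 𝓗.chambers | C ⊆ 𝓗.region M s}

variable {𝓗} {M : Finset (Fin n)} {s t u : Fin n → SignType} {x : Fin d → ℝ} {e f : Fin n}

lemma mem_cell : x ∈ 𝓗.cell t ↔ 𝓗.signVec x = t := by
  simp only [cell, mem_region, Finset.mem_univ, forall_const, funext_iff]

lemma mem_topes : t ∈ 𝓗.topes ↔ (∀ i, t i ≠ 0) ∧ (𝓗.cell t).Nonempty := by
  constructor
  · rintro ⟨x, hx, rfl⟩
    exact ⟨mem_free.1 hx, x, mem_cell.2 rfl⟩
  · rintro ⟨ht, x, hx⟩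
    obtain rfl := mem_cell.1 hx
    exact ⟨x, mem_free.2 ht, rfl⟩

lemma isOpen_cell (ht : t ∈ 𝓗.topes) : IsOpen (𝓗.cell t) :=
  isOpen_region fun i _ => (mem_topes.1 ht).1 i

lemma injOn_cell_topes : Set.InjOn 𝓗.cell 𝓗.topes := by
  intro t ht u _ htu
  obtain ⟨x, hx⟩ := (mem_topes.1 ht).2
  exact (mem_cell.1 hx).symm.trans (mem_cell.1 (htu ▸ hx))

lemma connectedComponentIn_free (hx : x ∈ 𝓗.free) :
    connectedComponentIn 𝓗.free x = 𝓗.cell (𝓗.signVec x) := by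
  have hmem : x ∈ 𝓗.cell (𝓗.signVec x) := mem_cell.2 rfl
  refine Set.Subset.antisymm (fun y hy => ?_)
    ((convex_region _ _).isPreconnected.subset_connectedComponentIn hmem fun y hy => ?_)
  · refine mem_cell.2 (funext fun i => ?_)
    by_contra hyx
    obtain ⟨z, hz, hzi⟩ := exists_mem_signVec_eq_zero isPreconnected_connectedComponentIn hy
      (mem_connectedComponentIn hx) hyx
    exact mem_free.1 (connectedComponentIn_subset _ _ hz) i hzi
  · rwa [mem_free, mem_cell.1 hy, ← mem_free]

lemma chambers_eq_image_cell : 𝓗.chambers = 𝓗.cell '' 𝓗.topes := by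
  ext C
  simp only [chambers, topes, Set.mem_ofPred_eq, Set.mem_image, exists_exists_and_eq_and]
  exact exists_congr fun x => and_congr_right fun hx => by
    rw [connectedComponentIn_free hx, eq_comm]

lemma cell_mem_chambers (ht : t ∈ 𝓗.topes) : 𝓗.cell t ∈ 𝓗.chambers :=
  chambers_eq_image_cell ▸ Set.mem_image_of_mem _ ht

lemma finite_chambers : 𝓗.chambers.Finite :=
  chambers_eq_image_cell ▸ (Set.toFinite 𝓗.topes).image _

lemma finite_edgeBoundary (S : Set (Set (Fin d → ℝ))) : (𝓗.edgeBoundary S).Finite :=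
  (finite_chambers.prod finite_chambers).subset fun _ hq => ⟨hq.2.2.1, hq.2.2.2.1⟩

lemma cell_subset_region_iff (ht : t ∈ 𝓗.topes) : 𝓗.cell t ⊆ 𝓗.region M s ↔ ∀ i ∈ M, t i = s i := by
  constructor
  · intro hsubset
    obtain ⟨x, hx⟩ := (mem_topes.1 ht).2
    exact mem_cell.1 hx ▸ hsubset hx
  · intro hts x hx i hi
    rw [mem_cell.1 hx, hts i hi]

lemma cell_mem_chambersIn (ht : t ∈ 𝓗.topes) :
    𝓗.cell t ∈ 𝓗.chambersIn M s ↔ ∀ i ∈ M, t i = s i := by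
  rw [← cell_subset_region_iff ht]
  exact and_iff_right (cell_mem_chambers ht)

lemma chambersIn_empty : 𝓗.chambersIn ∅ s = 𝓗.chambers := by
  simp only [chambersIn, region_empty, Set.subset_univ, and_true, Set.ofPred_mem_eq]

lemma separates_cell_iff (ht : t ∈ 𝓗.topes) (hu : u ∈ 𝓗.topes) :
    𝓗.Separates e (𝓗.cell t) (𝓗.cell u) ↔ t e ≠ u e := by
  have hpos : ∀ v ∈ 𝓗.topes, 𝓗.cell v ⊆ 𝓗.pos e ↔ v e = 1 := fun v hv => by
    have : 𝓗.pos e = 𝓗.region {e} 1 := by ext x; rw [mem_pos, mem_region_singleton, Pi.one_apply]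
    simpa [this] using cell_subset_region_iff (M := {e}) (s := 1) hv
  have hneg : ∀ v ∈ 𝓗.topes, 𝓗.cell v ⊆ 𝓗.neg e ↔ v e = -1 := fun v hv => by
    have : 𝓗.neg e = 𝓗.region {e} (-1) := by ext x; rw [mem_neg, mem_region_singleton]; rfl
    simpa [this] using cell_subset_region_iff (M := {e}) (s := -1) hv
  rw [Separates, hpos t ht, hneg u hu, hneg t ht, hpos u hu]
  have hte := (mem_topes.1 ht).1 e
  have hue := (mem_topes.1 hu).1 e
  revert hte hue
  generalize t e = v, u e = w
  decide +revert

lemma adj_cell_iff (ht : t ∈ 𝓗.topes) (hu : u ∈ 𝓗.topes) :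
    𝓗.Adj (𝓗.cell t) (𝓗.cell u) ↔ ∃! i, t i ≠ u i := by
  simp only [Adj, cell_mem_chambers ht, cell_mem_chambers hu, true_and, separates_cell_iff ht hu]

lemma inter_cell_update_nonempty (hgp : 𝓗.GeneralPosition) {V : Set (Fin d → ℝ)} (hV : IsOpen V)
    (hxV : x ∈ V) (hxf : 𝓗.signVec x f = 0) (hx : x ∈ 𝓗.region (Finset.univ.erase f) t)
    (ht : ∀ i ≠ f, t i ≠ 0) (v : SignType) : (V ∩ 𝓗.cell (Function.update t f v)).Nonempty := by
  have hopen : IsOpen (V ∩ 𝓗.region (Finset.univ.erase f) t) :=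
    hV.inter (isOpen_region fun i hi => ht i (Finset.ne_of_mem_erase hi))
  obtain ⟨y, ⟨hyV, hy⟩, hyf⟩ := inter_region_nonempty_of_mem_region_zero hgp hopen ⟨hxV, hx⟩
    (mem_region_singleton.2 hxf) (Function.update t f v)
  refine ⟨y, hyV, fun i _ => ?_⟩
  rcases eq_or_ne i f with rfl | hif
  · exact mem_region_singleton.1 hyf
  · rw [hy i (Finset.mem_erase.2 ⟨hif, Finset.mem_univ i⟩), Function.update_of_ne hif]

lemma update_mem_topes (hgp : 𝓗.GeneralPosition) (hxf : 𝓗.signVec x f = 0)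
    (hx : x ∈ 𝓗.region (Finset.univ.erase f) t) (ht : ∀ i ≠ f, t i ≠ 0) {v : SignType}
    (hv : v ≠ 0) : Function.update t f v ∈ 𝓗.topes := by
  refine mem_topes.2 ⟨fun i => ?_, ?_⟩
  · rcases eq_or_ne i f with rfl | hif
    · rwa [Function.update_self]
    · rw [Function.update_of_ne hif]
      exact ht i hif
  · exact (inter_cell_update_nonempty hgp isOpen_univ (Set.mem_univ x) hxf hx ht v).right

end Chambers

end Arrangement

lemma hammingDist_update_lt {ι : Type*} {β : ι → Type*} [Fintype ι] [DecidableEq ι]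
    [∀ i, DecidableEq (β i)] {t u : ∀ i, β i} {f : ι} (htu : t f ≠ u f) :
    hammingDist (Function.update t f (u f)) u < hammingDist t u := by
  refine Finset.card_lt_card (Finset.ssubset_iff_of_subset (fun i hi => ?_) |>.2 ⟨f, ?_, ?_⟩)
  · have hif : i ≠ f := by
      rintro rfl
      simp at hi
    simpa [Function.update_of_ne hif] using hi
  · simpa using htu
  · simp

namespace Arrangement

section ConvexChamberSet

variable {d n : ℕ} {𝓗 : Arrangement d n} {S : Set (Set (Fin d → ℝ))} {t u : Fin n → SignType}
  {x z : Fin d → ℝ} {f : Fin n}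

lemma cell_subset_thickening (ht : t ∈ 𝓗.topes) (htS : 𝓗.cell t ∈ S) :
    𝓗.cell t ⊆ thickening S :=
  interior_maximal ((Set.subset_biUnion_of_mem htS).trans subset_closure) (isOpen_cell ht)

lemma cell_mem_of_mem_thickening (hS : S ⊆ 𝓗.chambers) (ht : t ∈ 𝓗.topes) (hx : x ∈ 𝓗.cell t)
    (hxS : x ∈ thickening S) : 𝓗.cell t ∈ S := by
  obtain ⟨y, hy, hyS⟩ := mem_closure_iff.1 (interior_subset hxS) _ (isOpen_cell ht) hx
  obtain ⟨C, hCS, hyC⟩ := Set.mem_iUnion₂.1 hyS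
  obtain ⟨u, -, rfl⟩ := chambers_eq_image_cell ▸ hS hCS
  rwa [← mem_cell.1 hy, mem_cell.1 hyC]

lemma eq_of_forall_mem_walls_eq (hgp : 𝓗.GeneralPosition) (ht : t ∈ 𝓗.topes) (hu : u ∈ 𝓗.topes)
    (htu : ∀ i ∈ 𝓗.walls ∅ Finset.univ t, t i = u i) : t = u := by
  obtain ⟨ht₀, x, hx⟩ := mem_topes.1 ht
  obtain ⟨-, y, hy⟩ := mem_topes.1 hu
  have hwalls := region_walls_subset hgp (Finset.disjoint_empty_left Finset.univ)
    (fun i _ => ht₀ i) ⟨x, by rw [region_empty]; trivial, hx⟩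
  rw [region_empty, Set.univ_inter] at hwalls
  rw [← mem_cell.1 hy, mem_cell.1 (hwalls fun i hi => ?_)]
  rw [mem_cell.1 hy, htu i hi]

/- The segment from a point of `𝓗.H f` in `T_S` to a point in the relative interior of the facet
of `t` carried by `𝓗.H f` stays in `T_S`, so `T_S` contains points of the facet. -/
lemma exists_mem_thickening_of_mem_walls (hgp : 𝓗.GeneralPosition)
    (hconv : Convex ℝ (thickening S)) (ht : t ∈ 𝓗.topes) (htS : 𝓗.cell t ∈ S)
    (hf : f ∈ 𝓗.walls ∅ Finset.univ t) (hz : z ∈ thickening S) (hzf : 𝓗.signVec z f = 0) :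
    ∃ y ∈ thickening S, 𝓗.signVec y f = 0 ∧ y ∈ 𝓗.region (Finset.univ.erase f) t := by
  have ht₀ := (mem_topes.1 ht).1
  obtain ⟨-, w, hwf, hw⟩ := mem_walls.1 hf
  replace hwf : 𝓗.signVec w f = 0 := (mem_region_insert.1 hwf).1
  have hwclosure : w ∈ closure (thickening S) := by
    refine closure_mono (cell_subset_thickening ht htS) (mem_closure_iff.2 fun V hV hwV => ?_)
    have hne := inter_cell_update_nonempty hgp hV hwV hwf hw (fun i _ => ht₀ i) (t f)
    rwa [Function.update_eq_self] at hne
  have hsegment : openSegment ℝ z w ⊆ thickening S := by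
    have := hconv.openSegment_interior_closure_subset_interior
      (by rwa [thickening, interior_interior]) hwclosure
    rwa [thickening, interior_interior] at this
  have hwsegment : w ∈ closure (openSegment ℝ z w) := by
    rw [closure_openSegment]
    exact right_mem_segment ℝ z w
  obtain ⟨y, hyt, hy⟩ := mem_closure_iff.1 hwsegment _ (isOpen_region fun i _ => ht₀ i) hw
  exact ⟨y, hsegment hy, (signVec_eq_of_mem_openSegment hy (.inl hzf)).trans hwf, hyt⟩

lemma cell_update_mem (hgp : 𝓗.GeneralPosition) (hS : S ⊆ 𝓗.chambers)
    (hconv : Convex ℝ (thickening S)) (ht : t ∈ 𝓗.topes) (htS : 𝓗.cell t ∈ S)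
    (hf : f ∈ 𝓗.walls ∅ Finset.univ t) (hz : z ∈ thickening S) (hzf : 𝓗.signVec z f = 0) :
    Function.update t f (-t f) ∈ 𝓗.topes ∧ 𝓗.cell (Function.update t f (-t f)) ∈ S := by
  have ht₀ := (mem_topes.1 ht).1
  obtain ⟨y, hyS, hyf, hyt⟩ := exists_mem_thickening_of_mem_walls hgp hconv ht htS hf hz hzf
  have htope : Function.update t f (-t f) ∈ 𝓗.topes :=
    update_mem_topes hgp hyf hyt (fun i _ => ht₀ i) (by simpa using ht₀ f)
  obtain ⟨x, hxS, hx⟩ := inter_cell_update_nonempty hgp isOpen_interior hyS hyf hyt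
    (fun i _ => ht₀ i) (-t f)
  exact ⟨htope, cell_mem_of_mem_thickening hS htope hx hxS⟩

/- Among the chambers of `S` that agree with `u` on all hyperplanes missing `T_S`, one closest to
`u` must be `u` itself: otherwise it could be reflected in a wall separating it from `u`. -/
lemma cell_mem_of_forall_eq (hgp : 𝓗.GeneralPosition) (hS : S ⊆ 𝓗.chambers)
    (hconv : Convex ℝ (thickening S)) (ht : t ∈ 𝓗.topes) (htS : 𝓗.cell t ∈ S) (hu : u ∈ 𝓗.topes)
    (htu : ∀ i, (∀ z ∈ thickening S, 𝓗.signVec z i ≠ 0) → t i = u i) : 𝓗.cell u ∈ S := by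
  obtain ⟨v, ⟨hv, hvS, hvu⟩, hmin⟩ := exists_minimalFor_of_wellFoundedLT
    (fun v => v ∈ 𝓗.topes ∧ 𝓗.cell v ∈ S ∧
      ∀ i, (∀ z ∈ thickening S, 𝓗.signVec z i ≠ 0) → v i = u i)
    (hammingDist · u) ⟨t, ht, htS, htu⟩
  suffices v = u from this ▸ hvS
  refine eq_of_forall_mem_walls_eq hgp hv hu fun f hf => ?_
  by_contra hvuf
  obtain ⟨z, hz, hzf⟩ : ∃ z ∈ thickening S, 𝓗.signVec z f = 0 := by
    by_contra! hne
    exact hvuf (hvu f hne)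
  have hneg : -v f = u f := by
    have hvf := (mem_topes.1 hv).1 f
    have huf := (mem_topes.1 hu).1 f
    revert hvuf hvf huf
    generalize v f = a, u f = b
    decide +revert
  obtain ⟨hw, hwS⟩ := cell_update_mem hgp hS hconv hv hvS hf hz hzf
  rw [hneg] at hw hwS
  refine (hammingDist_update_lt hvuf).not_ge (hmin ⟨hw, hwS, fun i hi => ?_⟩
    (hammingDist_update_lt hvuf).le)
  rw [Function.update_of_ne (by rintro rfl; exact hi z hz hzf), hvu i hi]

theorem exists_eq_chambersIn_of_convex (hgp : 𝓗.GeneralPosition) (hS : S ⊆ 𝓗.chambers)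
    (hne : S.Nonempty) (hconv : Convex ℝ (thickening S)) :
    ∃ M s, (∀ i, s i ≠ 0) ∧ S = 𝓗.chambersIn M s := by
  classical
  obtain ⟨C, hCS⟩ := hne
  obtain ⟨s, hs, rfl⟩ := chambers_eq_image_cell ▸ hS hCS
  refine ⟨Finset.univ.filter fun i => ∀ z ∈ thickening S, 𝓗.signVec z i ≠ 0, s,
    (mem_topes.1 hs).1, Set.Subset.antisymm (fun C hC => ?_) ?_⟩
  · obtain ⟨t, ht, rfl⟩ := chambers_eq_image_cell ▸ hS hC
    refine (cell_mem_chambersIn ht).2 fun i hi => ?_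
    by_contra hts
    obtain ⟨x, hx⟩ := (mem_topes.1 ht).2
    obtain ⟨y, hy⟩ := (mem_topes.1 hs).2
    obtain ⟨z, hz, hzi⟩ := exists_mem_signVec_eq_zero hconv.isPreconnected
      (cell_subset_thickening ht hC hx) (cell_subset_thickening hs hCS hy)
      (i := i) (by rwa [mem_cell.1 hx, mem_cell.1 hy])
    exact (Finset.mem_filter.1 hi).2 z hz hzi
  · rintro C ⟨hC, hCM⟩
    obtain ⟨t, ht, rfl⟩ := chambers_eq_image_cell ▸ hC
    refine cell_mem_of_forall_eq hgp hS hconv hs hCS ht fun i hi => ?_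
    exact ((cell_subset_region_iff ht).1 hCM i (by simpa using hi)).symm

end ConvexChamberSet

end Arrangement

namespace Arrangement

section Counting

open scoped Finset

variable {d n : ℕ} {𝓗 : Arrangement d n} {M C : Finset (Fin n)} {s t : Fin n → SignType}
  {f : Fin n} {k : ℝ}

lemma mem_patterns_region :
    t ∈ 𝓗.patterns ∅ Finset.univ (𝓗.region M s) ↔ t ∈ 𝓗.topes ∧ ∀ i ∈ M, t i = s i := by
  have hsupport : Function.support t = (Finset.univ : Finset (Fin n)) ↔ ∀ i, t i ≠ 0 := by
    simp [Set.eq_univ_iff_forall]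
  rw [mem_patterns, region_empty, Set.inter_univ, hsupport, mem_topes, and_assoc]
  refine and_congr_right fun ht => ⟨?_, ?_⟩
  · rintro ⟨x, hxM, hx⟩
    exact ⟨⟨x, hx⟩, mem_cell.1 hx ▸ hxM⟩
  · rintro ⟨hne, hts⟩
    rw [← cell_subset_region_iff (mem_topes.2 ⟨ht, hne⟩)] at hts
    exact hne.mono (Set.subset_inter hts subset_rfl)

theorem ncard_chambersIn (hgp : 𝓗.GeneralPosition) (hs : ∀ i ∈ M, s i ≠ 0) :
    (𝓗.chambersIn M s).ncard = #(𝓗.flats ∅ Finset.univ (𝓗.region M s)) := by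
  have himage : 𝓗.chambersIn M s = 𝓗.cell '' 𝓗.patterns ∅ Finset.univ (𝓗.region M s) := by
    ext D
    constructor
    · rintro ⟨hD, hDM⟩
      obtain ⟨t, ht, rfl⟩ := chambers_eq_image_cell ▸ hD
      exact ⟨t, mem_patterns_region.2 ⟨ht, (cell_subset_region_iff ht).1 hDM⟩, rfl⟩
    · rintro ⟨t, ht, rfl⟩
      obtain ⟨ht, hts⟩ := mem_patterns_region.1 ht
      exact (cell_mem_chambersIn ht).2 hts
  rw [himage, (injOn_cell_topes.mono fun t ht => (mem_patterns_region.1 ht).1).ncard_image,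
    Set.ncard_coe_finset, card_patterns_eq_card_flats hgp (isOpen_region hs) (convex_region M s)
      (Finset.disjoint_empty_left _)]

lemma mem_flats_region : C ∈ 𝓗.flats ∅ Finset.univ (𝓗.region M s) ↔
    (𝓗.region C 0 ∩ 𝓗.region M s).Nonempty := by
  rw [mem_flats, Finset.empty_union, Set.inter_comm, and_iff_right (Finset.subset_univ C)]

lemma isLowerSet_flats_region :
    IsLowerSet (𝓗.flats ∅ Finset.univ (𝓗.region M s) : Set (Finset (Fin n))) := by
  intro C D hDC hC
  rw [Finset.mem_coe, mem_flats_region] at hC ⊢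
  exact hC.mono (Set.inter_subset_inter_left _ (region_subset_region hDC))

lemma card_le_of_mem_flats_region (hgp : 𝓗.GeneralPosition)
    (hC : C ∈ 𝓗.flats ∅ Finset.univ (𝓗.region M s)) : #C ≤ d := by
  obtain ⟨x, hx, -⟩ := mem_flats_region.1 hC
  exact card_le_of_mem_region_zero hgp hx

lemma disjoint_of_mem_flats_region (hs : ∀ i ∈ M, s i ≠ 0)
    (hC : C ∈ 𝓗.flats ∅ Finset.univ (𝓗.region M s)) : Disjoint C M := by
  obtain ⟨x, hxC, hxM⟩ := mem_flats_region.1 hC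
  exact Finset.disjoint_left.2 fun i hiC hiM => hs i hiM ((hxM i hiM).symm.trans (hxC i hiC))

lemma mem_flats_region_of_card_add_card_le (hgp : 𝓗.GeneralPosition) (hCM : Disjoint C M)
    (hcard : #C + #M ≤ d) : C ∈ 𝓗.flats ∅ Finset.univ (𝓗.region M s) := by
  obtain ⟨x, hx⟩ := region_nonempty hgp ((Finset.card_union_le C M).trans hcard) (C.piecewise 0 s)
  obtain ⟨hxC, hxM⟩ := mem_region_union.1 hx
  refine mem_flats_region.2 ⟨x, fun i hi => ?_, fun i hi => ?_⟩
  · rw [hxC i hi, Finset.piecewise_eq_of_mem _ _ _ hi]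
  · rw [hxM i hi, Finset.piecewise_eq_of_notMem _ _ _ (Finset.disjoint_right.1 hCM hi)]

lemma ncard_chambers_le (hgp : 𝓗.GeneralPosition) :
    (𝓗.chambers.ncard : ℝ) ≤ gchooseSum d n := by
  have hle : ∀ C ∈ 𝓗.flats ∅ Finset.univ (𝓗.region ∅ 0), #C ≤ d := fun C hC =>
    card_le_of_mem_flats_region hgp hC
  rw [← chambersIn_empty (s := 0), ncard_chambersIn hgp (by simp), gchooseSum_natCast,
    ← Finset.filter_true_of_mem hle, card_filter_card_le]
  norm_cast
  exact Finset.sum_le_sum fun i _ =>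
    (Finset.sized_slice.card_le).trans_eq (by rw [Fintype.card_fin])

lemma sum_min_le_sum_card_flats (hgp : 𝓗.GeneralPosition) (hs : ∀ i ∈ M, s i ≠ 0) :
    ∑ C ∈ 𝓗.flats ∅ Finset.univ (𝓗.region M s), min #M (d - #C) ≤
      ∑ f ∈ M, #(𝓗.flats {f} (Finset.univ.erase f) (𝓗.region (M.erase f) s)) := by
  classical
  calc ∑ C ∈ 𝓗.flats ∅ Finset.univ (𝓗.region M s), min #M (d - #C)
      ≤ ∑ C ∈ 𝓗.flats ∅ Finset.univ (𝓗.region M s), #(𝓗.walls C M s) :=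
        Finset.sum_le_sum fun C hC => min_card_le_card_walls hgp
          (disjoint_of_mem_flats_region hs hC) hs (mem_flats_region.1 hC)
    _ = ∑ f ∈ M, #((𝓗.flats ∅ Finset.univ (𝓗.region M s)).filter fun C =>
          (𝓗.region (insert f C) 0 ∩ 𝓗.region (M.erase f) s).Nonempty) :=
        Finset.sum_card_bipartiteAbove_eq_sum_card_bipartiteBelow _
    _ ≤ ∑ f ∈ M, #(𝓗.flats {f} (Finset.univ.erase f) (𝓗.region (M.erase f) s)) := by
        refine Finset.sum_le_sum fun f hf => Finset.card_le_card fun C hC => ?_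
        obtain ⟨hC, hne⟩ := Finset.mem_filter.1 hC
        have hfC : f ∉ C := Finset.disjoint_right.1 (disjoint_of_mem_flats_region hs hC) hf
        refine mem_flats.2 ⟨Finset.subset_erase.2 ⟨Finset.subset_univ C, hfC⟩, ?_⟩
        rwa [Set.inter_comm, ← Finset.insert_eq]

variable (𝓗) in
/-- The sign vectors, zero exactly at `f`, of the pieces of `𝓗.H f` lying on the side prescribed
by `s` of every other hyperplane in `M`. For `f ∈ M` these pieces correspond to the edges crossing
`𝓗.H f` in the edge boundary of `𝓗.chambersIn M s`. -/
def facetPatterns (M : Finset (Fin n)) (s : Fin n → SignType) (f : Fin n) :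
    Finset (Fin n → SignType) :=
  𝓗.patterns {f} (Finset.univ.erase f) (𝓗.region (M.erase f) s)

lemma mem_facetPatterns : t ∈ 𝓗.facetPatterns M s f ↔
    t f = 0 ∧ (∀ i ≠ f, t i ≠ 0) ∧ (∀ i ∈ M, i ≠ f → t i = s i) ∧ (𝓗.cell t).Nonempty := by
  have hsupport : Function.support t = (Finset.univ.erase f : Finset (Fin n)) ↔
      t f = 0 ∧ ∀ i ≠ f, t i ≠ 0 := by
    simp only [Set.ext_iff, Function.mem_support, Finset.mem_coe, Finset.mem_erase,
      Finset.mem_univ, and_true]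
    grind
  rw [facetPatterns, mem_patterns, hsupport, and_assoc]
  refine and_congr_right fun htf => and_congr_right fun _ => ?_
  have hcell : ∀ x, x ∈ 𝓗.cell t ↔ x ∈ 𝓗.region {f} 0 ∧ x ∈ 𝓗.region (Finset.univ.erase f) t :=
    fun x => by
      rw [cell, ← Finset.insert_erase (Finset.mem_univ f), mem_region_insert,
        mem_region_singleton, htf, Pi.zero_apply, Finset.erase_insert (Finset.notMem_erase f _)]
  constructor
  · rintro ⟨x, ⟨hxM, hxf⟩, hx⟩
    have hxt := (hcell x).2 ⟨hxf, hx⟩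
    refine ⟨fun i hi hif => ?_, x, hxt⟩
    rw [← mem_cell.1 hxt, hxM i (Finset.mem_erase.2 ⟨hif, hi⟩)]
  · rintro ⟨hts, x, hxt⟩
    obtain ⟨hxf, hx⟩ := (hcell x).1 hxt
    refine ⟨x, ⟨fun i hi => ?_, hxf⟩, hx⟩
    rw [mem_cell.1 hxt, hts i (Finset.mem_of_mem_erase hi) (Finset.ne_of_mem_erase hi)]

lemma update_mem_topes_of_mem_facetPatterns (hgp : 𝓗.GeneralPosition)
    (ht : t ∈ 𝓗.facetPatterns M s f) {v : SignType} (hv : v ≠ 0) :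
    Function.update t f v ∈ 𝓗.topes := by
  obtain ⟨htf, ht₀, -, x, hx⟩ := mem_facetPatterns.1 ht
  have hxf : 𝓗.signVec x f = 0 := by rw [mem_cell.1 hx, htf]
  exact update_mem_topes hgp hxf (region_subset_region (Finset.erase_subset f _) hx) ht₀ hv

lemma mem_edgeBoundary_of_mem_facetPatterns (hgp : 𝓗.GeneralPosition) (hf : f ∈ M)
    (hsf : s f ≠ 0) (ht : t ∈ 𝓗.facetPatterns M s f) :
    (𝓗.cell (Function.update t f (s f)), 𝓗.cell (Function.update t f (-s f))) ∈
      𝓗.edgeBoundary (𝓗.chambersIn M s) := by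
  have hin := update_mem_topes_of_mem_facetPatterns hgp ht hsf
  have hout := update_mem_topes_of_mem_facetPatterns hgp ht (v := -s f) (by simpa using hsf)
  have hself : s f ≠ -s f := fun h => hsf (SignType.self_eq_neg_iff.1 h)
  refine ⟨(cell_mem_chambersIn hin).2 fun i hi => ?_, fun hmem => hself ?_,
    (adj_cell_iff hin hout).2 ⟨f, by simpa using hself, fun i hi => ?_⟩⟩
  · rcases eq_or_ne i f with rfl | hif
    · rw [Function.update_self]
    · rw [Function.update_of_ne hif, (mem_facetPatterns.1 ht).2.2.1 i hi hif]
  · simpa using ((cell_mem_chambersIn hout).1 hmem f hf).symm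
  · by_contra hif
    simp [hif] at hi

lemma sum_card_facetPatterns_le_ncard_edgeBoundary (hgp : 𝓗.GeneralPosition)
    (hs : ∀ i ∈ M, s i ≠ 0) :
    ∑ f ∈ M, #(𝓗.facetPatterns M s f) ≤ (𝓗.edgeBoundary (𝓗.chambersIn M s)).ncard := by
  rw [← Finset.card_sigma, ← Set.ncard_coe_finset]
  refine Set.ncard_le_ncard_of_injOn
    (fun p => (𝓗.cell (Function.update p.2 p.1 (s p.1)),
      𝓗.cell (Function.update p.2 p.1 (-s p.1)))) ?_ ?_ (finite_edgeBoundary _)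
  · rintro ⟨f, t⟩ hp
    obtain ⟨hf, ht⟩ := Finset.mem_sigma.1 hp
    exact mem_edgeBoundary_of_mem_facetPatterns hgp hf (hs f hf) ht
  · rintro ⟨f, t⟩ hp ⟨g, u⟩ hq hpq
    obtain ⟨hf, ht⟩ := Finset.mem_sigma.1 hp
    obtain ⟨hg, hu⟩ := Finset.mem_sigma.1 hq
    obtain ⟨hcell, hcell_neg⟩ := Prod.mk.inj hpq
    have hupdate := injOn_cell_topes (update_mem_topes_of_mem_facetPatterns hgp ht (hs f hf))
      (update_mem_topes_of_mem_facetPatterns hgp hu (hs g hg)) hcell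
    have hupdate_neg := injOn_cell_topes
      (update_mem_topes_of_mem_facetPatterns hgp ht (by simpa using hs f hf))
      (update_mem_topes_of_mem_facetPatterns hgp hu (by simpa using hs g hg)) hcell_neg
    obtain rfl : f = g := by
      by_contra hfg
      have hsf := congrFun hupdate f
      have hsf_neg := congrFun hupdate_neg f
      simp only [Function.update_self, Function.update_of_ne hfg] at hsf hsf_neg
      exact hs f hf (SignType.self_eq_neg_iff.1 (hsf.trans hsf_neg.symm))
    have hzero := congrArg (Function.update · f 0) hupdate
    simp only [Function.update_idem] at hzero
    rw [← (mem_facetPatterns.1 ht).1, Function.update_eq_self, (mem_facetPatterns.1 ht).1,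
      ← (mem_facetPatterns.1 hu).1, Function.update_eq_self] at hzero
    rw [hzero]

lemma card_facetPatterns (hgp : 𝓗.GeneralPosition) (hs : ∀ i ∈ M, s i ≠ 0) (f : Fin n) :
    #(𝓗.facetPatterns M s f) =
      #(𝓗.flats {f} (Finset.univ.erase f) (𝓗.region (M.erase f) s)) :=
  card_patterns_eq_card_flats hgp (isOpen_region fun i hi => hs i (Finset.mem_of_mem_erase hi))
    (convex_region _ s) (Finset.disjoint_singleton_left.2 (Finset.notMem_erase f _))

theorem sum_min_le_ncard_edgeBoundary (hgp : 𝓗.GeneralPosition) (hs : ∀ i ∈ M, s i ≠ 0) :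
    ∑ C ∈ 𝓗.flats ∅ Finset.univ (𝓗.region M s), min #M (d - #C) ≤
      (𝓗.edgeBoundary (𝓗.chambersIn M s)).ncard := by
  refine (sum_min_le_sum_card_flats hgp hs).trans ?_
  simpa only [card_facetPatterns hgp hs] using sum_card_facetPatterns_le_ncard_edgeBoundary hgp hs

lemma le_of_gchooseSum_le_ncard_chambersIn (hgp : 𝓗.GeneralPosition) (hs : ∀ i ∈ M, s i ≠ 0)
    (hf : f ∈ M) (hd : 1 ≤ d) (hk : (d : ℝ) - 1 ≤ k)
    (hcard : gchooseSum d k ≤ (𝓗.chambersIn M s).ncard) : d ≤ n := by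
  have hflat : {f} ∉ 𝓗.flats ∅ Finset.univ (𝓗.region M s) := fun hmem =>
    Finset.disjoint_singleton_left.1 (disjoint_of_mem_flats_region hs hmem) hf
  have hlt : (𝓗.chambersIn M s).ncard < 2 ^ n := by
    rw [ncard_chambersIn hgp hs]
    simpa using Finset.card_lt_univ_of_notMem hflat
  have hpow : 2 ^ (d - 1) < 2 ^ n := by
    exact_mod_cast (two_pow_le_gchooseSum hd hk).trans_lt (hcard.trans_lt (Nat.cast_lt.2 hlt))
  have := (Nat.pow_lt_pow_iff_right one_lt_two).1 hpow
  lia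

theorem sum_gchooseSum_le_ncard_edgeBoundary (hgp : 𝓗.GeneralPosition) (hs : ∀ i ∈ M, s i ≠ 0)
    (hM : M.Nonempty) (hk : (d : ℝ) - 1 ≤ k) (hcard : gchooseSum d k ≤ (𝓗.chambersIn M s).ncard)
    (hkn : gchooseSum d k ≤ gchooseSum d (n - d)) :
    ∑ j ∈ Finset.range d, gchooseSum j k ≤ (𝓗.edgeBoundary (𝓗.chambersIn M s)).ncard := by
  obtain ⟨f, hf⟩ := hM
  have hd : 1 ≤ d := by
    obtain ⟨j, -⟩ := Function.ne_iff.1 (𝓗.normal_ne f)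
    exact j.pos
  have hdn : d ≤ n := le_of_gchooseSum_le_ncard_chambersIn hgp hs hf hd hk hcard
  rw [ncard_chambersIn hgp hs] at hcard
  calc ∑ j ∈ Finset.range d, gchooseSum j k
      ≤ ((∑ C ∈ 𝓗.flats ∅ Finset.univ (𝓗.region M s), min #M (d - #C) : ℕ) : ℝ) :=
        sum_gchooseSum_le_sum_min isLowerSet_flats_region
          (fun C => card_le_of_mem_flats_region hgp) ⟨f, hf⟩
          (fun C => mem_flats_region_of_card_add_card_le hgp) hk
          (le_sub_of_gchooseSum_le hd hdn hk hkn) hcard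
    _ ≤ (𝓗.edgeBoundary (𝓗.chambersIn M s)).ncard := by
        exact_mod_cast sum_min_le_ncard_edgeBoundary hgp hs

lemma sum_sub_mul_gchoose_le_ncard_edgeBoundary {S : Set (Set (Fin d → ℝ))}
    (hgp : 𝓗.GeneralPosition) (hS : S ⊆ 𝓗.chambers) (hproper : S ≠ 𝓗.chambers)
    (hconv : Convex ℝ (thickening S)) (hk : (d : ℝ) - 1 ≤ k) (hcard : S.ncard = gchooseSum d k)
    (hle : (S.ncard : ℝ) ≤ gchooseSum d (n - d)) :
    ∑ i ∈ Finset.range d, ((d : ℝ) - i) * gchoose k i ≤ (𝓗.edgeBoundary S).ncard := by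
  have hne : S.Nonempty := by
    refine Set.nonempty_of_ncard_ne_zero fun hzero => ?_
    have hone := one_le_gchooseSum hk
    norm_num [← hcard, hzero] at hone
  obtain ⟨M, s, hs, rfl⟩ := exists_eq_chambersIn_of_convex hgp hS hne hconv
  have hM : M.Nonempty := by
    refine Finset.nonempty_iff_ne_empty.2 ?_
    rintro rfl
    exact hproper chambersIn_empty
  rw [sum_sub_mul_gchoose]
  exact sum_gchooseSum_le_ncard_edgeBoundary hgp (fun i _ => hs i) hM hk hcard.ge (hcard ▸ hle)

end Counting

end Arrangement

/-- For a proper convex subset `S` with `|S| = ∑_{i=0}^d C(k,i)`,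
`k ≥ d-1`: if `|S| ≤ ∑_{i=0}^d C(n-d,i)` then `|∂S| ≥ ∑_{i=0}^{d-1} (d-i)·C(k,i)`;
in particular this conclusion holds whenever `|S|` is at most half of the total
number of chambers and `n ≥ d²/ln 2 + 2d`. -/
theorem stmt8 {d n : ℕ} (𝓗 : Arrangement d n) (hgp : 𝓗.GeneralPosition)
    (S : Set (Set (Fin d → ℝ))) (hS : S ⊆ 𝓗.chambers)
    (hproper : S ≠ 𝓗.chambers)
    (hconv : Convex ℝ (thickening S))
    (k : ℝ) (hk : (d : ℝ) - 1 ≤ k)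
    (hcard : (S.ncard : ℝ) = ∑ i ∈ Finset.range (d + 1), gchoose k i) :
    (((S.ncard : ℝ) ≤ ∑ i ∈ Finset.range (d + 1), gchoose ((n : ℝ) - d) i) →
      (∑ i ∈ Finset.range d, ((d : ℝ) - i) * gchoose k i) ≤
        ((𝓗.edgeBoundary S).ncard : ℝ)) ∧
    ((2 * S.ncard ≤ (𝓗.chambers).ncard ∧
        (d : ℝ) ^ 2 / Real.log 2 + 2 * d ≤ (n : ℝ)) →
      (∑ i ∈ Finset.range d, ((d : ℝ) - i) * gchoose k i) ≤
        ((𝓗.edgeBoundary S).ncard : ℝ)) := by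
  have hbound : (S.ncard : ℝ) ≤ gchooseSum d (n - d) →
      (∑ i ∈ Finset.range d, ((d : ℝ) - i) * gchoose k i) ≤ (𝓗.edgeBoundary S).ncard :=
    Arrangement.sum_sub_mul_gchoose_le_ncard_edgeBoundary hgp hS hproper hconv hk hcard
  refine ⟨hbound, fun ⟨hhalf, hn⟩ => hbound ?_⟩
  have hhalf_real : 2 * (S.ncard : ℝ) ≤ 𝓗.chambers.ncard := by exact_mod_cast hhalf
  have hchambers := Arrangement.ncard_chambers_le hgp
  have hthreshold := gchooseSum_le_two_mul_gchooseSum_sub hn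
  linarith
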